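/- arXiv:1201.1263 — 5 statements merged into one kernel-verified Lean document; each statement's English description precedes it below -/
import Mathlib

section
/- Let (R,m) be a Noetherian local ring of prime characteristic p and dimension d. If R is Cohen-Macaulay, then Tor_i^R(R^f, H^d_m(R)) = 0 for all i ≥ 1. -/
/-!
Let `rs = r₁, …, r_d` be a regular sequence of nonunits with Artinian quotient; its length is the
dimension `d`. The ideals `(rsᵗ) = (r₁ᵗ, …, r_dᵗ)` are cofinal among the ideals whose radical
contains `m`, so `H^d_m(R)` is the filtered colimit over `t` of `Ext^d(R / (rsᵗ), R)`
(`localCohomology_torAcyclic`).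

Powers of a weakly regular sequence are weakly regular (`isWeaklyRegular_pow`). Hence the theorem of
Rees (`rees`) gives `Ext^d(R / (rsᵗ), R) ≅ Hom(R / (rsᵗ), R / (rsᵗ)) ≅ R / (rsᵗ)`. No control over
the transition maps is needed, because `Tor` commutes with filtered colimits
(`TorAcyclic.of_isColimit`): it is enough that `Tor_i(R^f, R / (rsᵗ)) = 0` for `i ≥ 1`. This holds
because `rsᵗ` is weakly regular both on `R` and on `R^f`, where each element acts through its
`p`-th power (`TorAcyclic.quot_ofList`, `isWeaklyRegular_frobTwist`).

The vanishing of all higher `Tor` is carried through the argument in an elementary form,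
`TorAcyclic`: the inclusions of the iterated syzygies into their free modules remain injective after
tensoring. Dimension shifting (`TorAcyclic.subsingleton_tor`) turns it into a statement about `Tor`.
-/

open TensorProduct IsLocalRing

universe u v

/-- `R` viewed as an `R`-algebra via the Frobenius `r ↦ r ^ p`.  As an `R`-module this is
the right-module structure of the bimodule `R^f`, i.e. `s · r = s * r ^ p`. -/
def FrobTwist (R : Type u) [CommRing R] (p : ℕ) [Fact p.Prime] [CharP R p] : Type u := R

noncomputable instance (R : Type u) [CommRing R] (p : ℕ) [Fact p.Prime] [CharP R p] :
    CommRing (FrobTwist R p) := inferInstanceAs (CommRing R)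

noncomputable instance (R : Type u) [CommRing R] (p : ℕ) [Fact p.Prime] [CharP R p] :
    Algebra R (FrobTwist R p) := (frobenius R p).toAlgebra

/-- The element of `FrobTwist R p` corresponding to `r : R`. -/
def FrobTwist.of (R : Type u) [CommRing R] (p : ℕ) [Fact p.Prime] [CharP R p] (r : R) :
    FrobTwist R p := r

/-- The Frobenius functor `F_R(M) = R^f ⊗_R M`, with its left `R`-module structure
coming from multiplication on the left tensor factor. -/
def FrobModule (R : Type u) [CommRing R] (p : ℕ) [Fact p.Prime] [CharP R p]
    (M : Type v) [AddCommGroup M] [Module R M] : Type (max u v) :=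
  FrobTwist R p ⊗[R] M

noncomputable instance (R : Type u) [CommRing R] (p : ℕ) [Fact p.Prime] [CharP R p]
    (M : Type v) [AddCommGroup M] [Module R M] : AddCommGroup (FrobModule R p M) :=
  inferInstanceAs (AddCommGroup (FrobTwist R p ⊗[R] M))

noncomputable instance (R : Type u) [CommRing R] (p : ℕ) [Fact p.Prime] [CharP R p]
    (M : Type v) [AddCommGroup M] [Module R M] : Module R (FrobModule R p M) :=
  inferInstanceAs (Module (FrobTwist R p) (FrobTwist R p ⊗[R] M))

/-- A (Noetherian, local) ring is Cohen–Macaulay if some regular sequence consisting of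
nonunits generates an ideal of definition, i.e. has an Artinian quotient. -/
def IsCohenMacaulayLocalRing (A : Type u) [CommRing A] : Prop :=
  ∃ rs : List A, (∀ r ∈ rs, ¬ IsUnit r) ∧ RingTheory.Sequence.IsRegular A rs ∧
    IsArtinianRing (A ⧸ Ideal.span {x | x ∈ rs})

/-! ### Powers of weakly regular sequences -/

open RingTheory.Sequence Pointwise in
/-- In a short exact sequence, a sequence which is weakly regular on both ends is weakly regular
on the middle term: regularity of the first element on the right-hand end keeps the sequence short
exact after reduction modulo that element. -/
lemma isWeaklyRegular_of_exact {R : Type u} [CommRing R] (rs : List R) {M M' M'' : Type u}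
    [AddCommGroup M] [Module R M] [AddCommGroup M'] [Module R M'] [AddCommGroup M'']
    [Module R M''] (f : M →ₗ[R] M') (g : M' →ₗ[R] M'') (hf : Function.Injective f)
    (hfg : Function.Exact f g) (hg : Function.Surjective g)
    (h₁ : IsWeaklyRegular M rs) (h₂ : IsWeaklyRegular M'' rs) : IsWeaklyRegular M' rs := by
  induction rs generalizing M M' M'' with
  | nil => exact IsWeaklyRegular.nil R M'
  | cons r rs ih =>
    rw [isWeaklyRegular_cons_iff] at h₁ h₂ ⊢
    refine ⟨isSMulRegular_of_range_eq_ker hf (LinearMap.exact_iff.mp hfg).symm h₁.1 h₂.1, ?_⟩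
    refine ih (QuotSMulTop.map r f) (QuotSMulTop.map r g) ?_ (QuotSMulTop.map_exact r hfg hg)
      (QuotSMulTop.map_surjective r hg) h₁.2 h₂.2
    have h0 : Function.Exact (0 : M →ₗ[R] M) f :=
      fun x => ⟨fun hx => ⟨0, by simpa using hf (by simpa using hx.symm)⟩, by rintro ⟨y, rfl⟩; simp⟩
    have := QuotSMulTop.map_first_exact_on_four_term_exact_of_isSMulRegular_last h0 hfg h₂.1
    rw [injective_iff_map_eq_zero]
    intro a ha
    obtain ⟨b, rfl⟩ := (this a).mp ha
    simp

open RingTheory.Sequence Pointwise in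
lemma isWeaklyRegular_of_subsingleton {R : Type u} [CommRing R] (rs : List R) {M : Type u}
    [AddCommGroup M] [Module R M] [Subsingleton M] : IsWeaklyRegular M rs := by
  induction rs generalizing M with
  | nil => exact IsWeaklyRegular.nil R M
  | cons r rs ih =>
    rw [isWeaklyRegular_cons_iff]
    exact ⟨fun _ _ _ => Subsingleton.elim _ _,
      ih (M := QuotSMulTop r M)⟩

open RingTheory.Sequence Pointwise in
/-- The first element of a weakly regular sequence may be replaced by a power. By induction on the
exponent, using the exact sequence `0 → M / rⁿ M → M / rⁿ⁺¹ M → M / r M → 0` whose first map is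
multiplication by `r`. -/
lemma isWeaklyRegular_pow_head {R : Type u} [CommRing R] (r : R) (rs : List R) {M : Type u}
    [AddCommGroup M] [Module R M] (h : IsWeaklyRegular M (r :: rs)) (n : ℕ) :
    IsWeaklyRegular (QuotSMulTop (r ^ n) M) rs := by
  rw [isWeaklyRegular_cons_iff] at h
  induction n with
  | zero =>
    have : Subsingleton (QuotSMulTop (r ^ 0) M) := by
      simp [QuotSMulTop, Submodule.Quotient.subsingleton_iff]
    exact isWeaklyRegular_of_subsingleton _
  | succ n ih =>
    have h1 : (r ^ n • ⊤ : Submodule R M) ≤ (r ^ (n + 1) • ⊤ : Submodule R M).comap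
        (LinearMap.lsmul R M r) := by
      rintro _ ⟨y, -, rfl⟩
      exact ⟨y, trivial, by simp [smul_smul, pow_succ', mul_comm]⟩
    have h2 : (r ^ (n + 1) • ⊤ : Submodule R M) ≤ (r • ⊤ : Submodule R M).comap
        LinearMap.id := by
      rintro _ ⟨y, -, rfl⟩
      exact ⟨r ^ n • y, trivial, by simp [smul_smul, pow_succ', mul_comm]⟩
    refine isWeaklyRegular_of_exact rs (Submodule.mapQ _ _ _ h1)
      (Submodule.mapQ _ _ _ h2) ?_ ?_ ?_ ih h.2
    · rw [injective_iff_map_eq_zero]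
      intro a ha
      obtain ⟨a, rfl⟩ := Submodule.mkQ_surjective _ a
      simp only [Submodule.mkQ_apply, Submodule.mapQ_apply, Submodule.Quotient.mk_eq_zero] at ha ⊢
      obtain ⟨y, -, hy⟩ := ha
      refine ⟨y, trivial, h.1 ?_⟩
      simpa [pow_succ', mul_smul] using hy
    · intro a
      obtain ⟨a, rfl⟩ := Submodule.mkQ_surjective _ a
      simp only [Submodule.mkQ_apply, Submodule.mapQ_apply, Submodule.Quotient.mk_eq_zero]
      constructor
      · rintro ⟨y, -, hy⟩
        exact ⟨Submodule.Quotient.mk y, congrArg Submodule.Quotient.mk hy⟩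
      · rintro ⟨y, hy⟩
        obtain ⟨y, rfl⟩ := Submodule.mkQ_surjective _ y
        simp only [Submodule.mkQ_apply, Submodule.mapQ_apply, Submodule.Quotient.eq] at hy
        obtain ⟨z, -, hz⟩ := hy
        refine ⟨y - r ^ n • z, trivial, ?_⟩
        simp only [DistribSMul.toLinearMap_apply, pow_succ', mul_smul, LinearMap.lsmul_apply,
          LinearMap.id_apply, smul_sub] at hz ⊢
        rw [hz]; abel
    · intro a
      obtain ⟨a, rfl⟩ := Submodule.mkQ_surjective _ a
      exact ⟨Submodule.Quotient.mk a, by simp⟩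

open RingTheory.Sequence Pointwise in
lemma isWeaklyRegular_pow {R : Type u} [CommRing R] (rs : List R) {M : Type u}
    [AddCommGroup M] [Module R M] (h : IsWeaklyRegular M rs) (n : ℕ) :
    IsWeaklyRegular M (rs.map (· ^ n)) := by
  induction rs generalizing M with
  | nil => exact IsWeaklyRegular.nil R M
  | cons r rs ih =>
    rw [List.map_cons, isWeaklyRegular_cons_iff]
    exact ⟨((isWeaklyRegular_cons_iff _ _ _).mp h).1.pow n, ih (isWeaklyRegular_pow_head r rs h n)⟩

/-! ### Syzygies and acyclicity for the tensor product -/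

/-- The first syzygy of `X` in its tautological presentation: the kernel of the surjection
`X →₀ R → X` from the free module on all elements of `X`. -/
noncomputable def syz {R : Type u} [CommRing R] (X : ModuleCat.{u} R) : ModuleCat.{u} R :=
  ModuleCat.of R (LinearMap.ker (Finsupp.linearCombination R (id : X → X)))

/-- The inclusion of the syzygy of `X` into the free module `X →₀ R`. -/
noncomputable def syzInc {R : Type u} [CommRing R] (X : ModuleCat.{u} R) : syz X →ₗ[R] (X →₀ R) :=
  (LinearMap.ker (Finsupp.linearCombination R (id : X → X))).subtype

lemma syzInc_exact {R : Type u} [CommRing R] (X : ModuleCat.{u} R) :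
    Function.Exact (syzInc X) (Finsupp.linearCombination R (id : X → X)) :=
  LinearMap.exact_subtype_ker_map _

lemma linearCombination_id_surjective {R : Type u} [CommRing R] (X : ModuleCat.{u} R) :
    Function.Surjective (Finsupp.linearCombination R (id : X → X)) :=
  Finsupp.linearCombination_surjective R Function.surjective_id

/-- An elementary form of the condition `Tor_i(X, N) = 0` for all `i ≥ 1`: each inclusion of an
iterated syzygy of `X` into its free module stays injective after tensoring with `N`. The `i`-th
of these conditions says `Tor_1(syzⁱ X, N) = 0`. -/
def TorAcyclic {R : Type u} [CommRing R] (X : ModuleCat.{u} R) (N : Type u) [AddCommGroup N]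
    [Module R N] : Prop :=
  ∀ i : ℕ, Function.Injective ((syzInc (syz^[i] X)).rTensor N)

lemma TorAcyclic.syz {R : Type u} [CommRing R] {X : ModuleCat.{u} R} {N : Type u} [AddCommGroup N]
    [Module R N] (h : TorAcyclic X N) : TorAcyclic (syz X) N := fun i => h (i + 1)

lemma TorAcyclic.of_equiv {R : Type u} [CommRing R] {X : ModuleCat.{u} R} {N N' : Type u}
    [AddCommGroup N] [Module R N] [AddCommGroup N'] [Module R N'] (e : N ≃ₗ[R] N')
    (h : TorAcyclic X N) : TorAcyclic X N' := by
  intro i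
  have : (syzInc (_root_.syz^[i] X)).rTensor N' = (e.lTensor _).toLinearMap ∘ₗ
      (syzInc (_root_.syz^[i] X)).rTensor N ∘ₗ (e.symm.lTensor _).toLinearMap := by
    ext; simp
  rw [this]
  exact (e.lTensor _).injective.comp ((h i).comp (e.symm.lTensor _).injective)

lemma TorAcyclic.of_flat {R : Type u} [CommRing R] (X : ModuleCat.{u} R) (N : Type u)
    [AddCommGroup N] [Module R N] [Module.Flat R N] : TorAcyclic X N :=
  fun _ => Module.Flat.rTensor_preserves_injective_linearMap _ Subtype.val_injective

open Pointwise in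
/-- If `0 → X' → P → X → 0` is exact, stays exact after tensoring with `M`, and `r` is regular on
`X ⊗ M`, then it also stays exact after tensoring with `M / r M`. -/
lemma rTensor_quotSMulTop_injective {R : Type u} [CommRing R] {X' P X M : Type u}
    [AddCommGroup X'] [Module R X'] [AddCommGroup P] [Module R P] [AddCommGroup X] [Module R X]
    [AddCommGroup M] [Module R M] (f : X' →ₗ[R] P) (g : P →ₗ[R] X) (hfg : Function.Exact f g)
    (hg : Function.Surjective g) (r : R) (hf : Function.Injective (f.rTensor M))
    (hr : IsSMulRegular (X ⊗[R] M) r) : Function.Injective (f.rTensor (QuotSMulTop r M)) := by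
  have h0 : Function.Exact (0 : M →ₗ[R] X' ⊗[R] M) (f.rTensor M) :=
    fun x => ⟨fun hx => ⟨0, by simpa using hf (by simpa using hx.symm)⟩, by rintro ⟨y, rfl⟩; simp⟩
  have h1 := QuotSMulTop.map_first_exact_on_four_term_exact_of_isSMulRegular_last h0
    (rTensor_exact M hfg hg) hr
  have h2 : Function.Injective (QuotSMulTop.map r (f.rTensor M)) := by
    rw [injective_iff_map_eq_zero]
    intro a ha
    obtain ⟨b, rfl⟩ := (h1 a).mp ha
    simp
  have h3 : (QuotSMulTop.tensorQuotSMulTopEquivQuotSMulTop r P M).toLinearMap ∘ₗ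
      (f.rTensor (QuotSMulTop r M)) =
      QuotSMulTop.map r (f.rTensor M) ∘ₗ
      (QuotSMulTop.tensorQuotSMulTopEquivQuotSMulTop r X' M).toLinearMap := by
    ext x m
    have key : ∀ (Y : Type u) [AddCommGroup Y] [Module R Y] (y : Y),
        QuotSMulTop.tensorQuotSMulTopEquivQuotSMulTop r Y M (y ⊗ₜ Submodule.Quotient.mk m) =
          Submodule.Quotient.mk (y ⊗ₜ m) := by
      intro Y _ _ y
      simp [QuotSMulTop.tensorQuotSMulTopEquivQuotSMulTop, QuotSMulTop.equivTensorQuot,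
        LinearEquiv.symm_apply_eq]
      exact (tensorQuotEquivQuotSMul_tmul_mk (Ideal.span {r}) (y ⊗ₜ m) 1).trans (by simp)
    have e1 := key P (f x)
    have e2 := key X' x
    simp [e1, e2]
  have h4 : Function.Injective ((QuotSMulTop.tensorQuotSMulTopEquivQuotSMulTop r P M).toLinearMap ∘ₗ
      (f.rTensor (QuotSMulTop r M))) := by
    rw [h3]; simpa using h2
  rw [LinearMap.coe_comp] at h4
  exact h4.of_comp

/-- `Tor`-acyclicity descends to `N / r N` when `r` is regular on `N` and on `X ⊗ N`. The element
`r` is then regular on `Y ⊗ N` for every iterated syzygy `Y` of `X`, because `Y ⊗ N` embeds into a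
direct sum of copies of `N`. -/
lemma TorAcyclic.quotSMulTop {R : Type u} [CommRing R] {X : ModuleCat.{u} R} {N : Type u}
    [AddCommGroup N] [Module R N] (h : TorAcyclic X N) (r : R) (hr : IsSMulRegular N r)
    (hX : IsSMulRegular (X ⊗[R] N) r) : TorAcyclic X (QuotSMulTop r N) := by
  have key : ∀ i, IsSMulRegular ((_root_.syz^[i] X : ModuleCat R) ⊗[R] N) r := by
    intro i
    induction i with
    | zero => exact hX
    | succ i ih =>
      rw [Function.iterate_succ_apply']
      exact IsSMulRegular.of_injective _ (h i) (hr.lTensor _)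
  intro i
  exact rTensor_quotSMulTop_injective _ _ (syzInc_exact _) (linearCombination_id_surjective _) r
    (h i) (key i)

open RingTheory.Sequence Pointwise in
lemma TorAcyclic.quot_ofList {R : Type u} [CommRing R] {X : ModuleCat.{u} R} (rs : List R)
    {N : Type u} [AddCommGroup N] [Module R N] (h : TorAcyclic X N) (hN : IsWeaklyRegular N rs)
    (hX : IsWeaklyRegular (X ⊗[R] N) rs) :
    TorAcyclic X (N ⧸ (Ideal.ofList rs • ⊤ : Submodule R N)) := by
  induction rs generalizing N with
  | nil => exact h.of_equiv (Submodule.quotEquivOfEqBot _ (by simp)).symm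
  | cons r rs ih =>
    rw [isWeaklyRegular_cons_iff] at hN hX
    refine (ih (h.quotSMulTop r hN.1 hX.1) hN.2 ?_).of_equiv
      (Submodule.quotOfListConsSMulTopEquivQuotSMulTopInner N r rs).symm
    exact ((QuotSMulTop.tensorQuotSMulTopEquivQuotSMulTop r X N).isWeaklyRegular_congr rs).mpr hX.2

/-! ### Acyclicity implies the vanishing of `Tor` -/

section
open CategoryTheory MonoidalCategory Limits

variable {R : Type u} [CommRing R]

/-- The complex `X ⊗ Q`, whose homology is `Tor_i(X, N)` for a projective resolution `Q` of `N`. -/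
noncomputable abbrev tensorComplex {N : ModuleCat.{u} R} (Q : ProjectiveResolution N)
    (X : ModuleCat.{u} R) : ChainComplex (ModuleCat.{u} R) ℕ :=
  (((tensoringLeft (ModuleCat.{u} R)).obj X).mapHomologicalComplex _).obj Q.complex

/-- The map of complexes `X ⊗ Q ⟶ Y ⊗ Q` induced by `f : X ⟶ Y`. -/
noncomputable abbrev tensorComplexMap {N : ModuleCat.{u} R} (Q : ProjectiveResolution N)
    {X Y : ModuleCat.{u} R} (f : X ⟶ Y) : tensorComplex Q X ⟶ tensorComplex Q Y :=
  (NatTrans.mapHomologicalComplex ((tensoringLeft (ModuleCat.{u} R)).map f) _).app Q.complex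

/-- The short complex of complexes `S ⊗ Q`. -/
noncomputable def tensorShortComplex {N : ModuleCat.{u} R} (Q : ProjectiveResolution N)
    (S : ShortComplex (ModuleCat.{u} R)) : ShortComplex (ChainComplex (ModuleCat.{u} R) ℕ) :=
  ShortComplex.mk (tensorComplexMap Q S.f) (tensorComplexMap Q S.g) (by
    ext i : 1
    have h : S.f ▷ Q.complex.X i ≫ S.g ▷ Q.complex.X i = 0 := by
      rw [← comp_whiskerRight, S.zero, MonoidalPreadditive.zero_whiskerRight]
    exact h)

lemma tensorShortComplex_shortExact {N : ModuleCat.{u} R} (Q : ProjectiveResolution N)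
    {S : ShortComplex (ModuleCat.{u} R)} (hS : S.ShortExact) :
    (tensorShortComplex Q S).ShortExact := by
  apply HomologicalComplex.shortExact_of_degreewise_shortExact
  intro i
  have : Module.Flat R (Q.complex.X i) := by
    have := (IsProjective.iff_projective (R := R) (Q.complex.X i)).mpr (Q.projective i)
    infer_instance
  exact hS.map_of_exact (tensorRight (Q.complex.X i))

lemma tensorComplex_homology_isZero_of_flat {N : ModuleCat.{u} R} (Q : ProjectiveResolution N)
    (P : ModuleCat.{u} R) [Module.Flat R P] (i : ℕ) :
    IsZero ((tensorComplex Q P).homology (i + 1)) := by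
  rw [← HomologicalComplex.exactAt_iff_isZero_homology]
  exact (Q.complex_exactAt_succ i).map (tensorLeft P)

/-- In degree zero the opcycles of `X ⊗ Q` are `X ⊗ N`, so injectivity of `f ⊗ N` gives injectivity
on opcycles. -/
lemma opcyclesMap_mono {N : ModuleCat.{u} R} (Q : ProjectiveResolution N) {X Y : ModuleCat.{u} R}
    (f : X ⟶ Y) [Mono (f ▷ N)] : Mono (HomologicalComplex.opcyclesMap (tensorComplexMap Q f) 0) := by
  have hiso : ∀ Z : ModuleCat.{u} R,
      IsIso (Q.fromLeftDerivedZero' ((tensoringLeft (ModuleCat.{u} R)).obj Z)) := by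
    intro Z
    have : PreservesFiniteColimits ((tensoringLeft (ModuleCat.{u} R)).obj Z) :=
      inferInstanceAs (PreservesFiniteColimits (tensorLeft Z))
    infer_instance
  have : HomologicalComplex.opcyclesMap (tensorComplexMap Q f) 0 ≫
      Q.fromLeftDerivedZero' ((tensoringLeft (ModuleCat.{u} R)).obj Y) =
      Q.fromLeftDerivedZero' ((tensoringLeft (ModuleCat.{u} R)).obj X) ≫ (f ▷ N) := by
    rw [← cancel_epi (HomologicalComplex.pOpcycles _ _)]
    simp only [HomologicalComplex.p_opcyclesMap_assoc,
      ProjectiveResolution.pOpcycles_comp_fromLeftDerivedZero',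
      ProjectiveResolution.pOpcycles_comp_fromLeftDerivedZero'_assoc]
    exact (whisker_exchange f (Q.π.f 0)).symm
  have h2 : Mono (HomologicalComplex.opcyclesMap (tensorComplexMap Q f) 0 ≫
      Q.fromLeftDerivedZero' ((tensoringLeft (ModuleCat.{u} R)).obj Y)) := by
    rw [this]
    have := hiso X
    infer_instance
  exact mono_of_mono _ (Q.fromLeftDerivedZero' ((tensoringLeft (ModuleCat.{u} R)).obj Y))

/-- The short complex `syz X ⟶ (X →₀ R) ⟶ X`. -/
noncomputable def syzShortComplex (X : ModuleCat.{u} R) : ShortComplex (ModuleCat.{u} R) :=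
  ShortComplex.mk (X₂ := ModuleCat.of R (X →₀ R)) (ModuleCat.ofHom (syzInc X))
    (ModuleCat.ofHom (Finsupp.linearCombination R (id : X → X)))
    (by ext x; exact x.2)

lemma syzShortComplex_shortExact (X : ModuleCat.{u} R) : (syzShortComplex X).ShortExact where
  exact := (ShortComplex.ShortExact.moduleCat_exact_iff_function_exact _).mpr (syzInc_exact X)
  mono_f := (ModuleCat.mono_iff_injective _).mpr Subtype.val_injective
  epi_g := (ModuleCat.epi_iff_surjective _).mpr (linearCombination_id_surjective X)

/-- Dimension shifting along `syz X ⟶ (X →₀ R) ⟶ X`. In degree one, the connecting map is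
injective and has image the kernel of `syz X ⊗ N → (X →₀ R) ⊗ N`. -/
lemma TorAcyclic.isZero_homology {X : ModuleCat.{u} R} {N : ModuleCat.{u} R}
    (h : TorAcyclic X N) (Q : ProjectiveResolution N) (i : ℕ) :
    IsZero ((tensorComplex Q X).homology (i + 1)) := by
  induction i generalizing X with
  | zero =>
    have hS := tensorShortComplex_shortExact Q (syzShortComplex_shortExact X)
    have hmono :
        Mono (HomologicalComplex.homologyMap (tensorShortComplex Q (syzShortComplex X)).f 0) := by
      have : Mono ((syzShortComplex X).f ▷ N) := (ModuleCat.mono_iff_injective _).mpr (h 0)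
      have : Mono (HomologicalComplex.opcyclesMap (tensorShortComplex Q (syzShortComplex X)).f 0) :=
        opcyclesMap_mono Q (syzShortComplex X).f
      have h3 : Mono (HomologicalComplex.homologyMap
          (tensorShortComplex Q (syzShortComplex X)).f 0 ≫ HomologicalComplex.homologyι _ 0) := by
        rw [HomologicalComplex.homologyι_naturality]
        infer_instance
      exact mono_of_mono _ (HomologicalComplex.homologyι _ 0)
    have h2 : IsZero ((tensorShortComplex Q (syzShortComplex X)).X₂.homology 1) :=
      tensorComplex_homology_isZero_of_flat Q (ModuleCat.of R (X →₀ R)) 0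
    have hδ : Mono (hS.δ 1 0 (by simp)) := hS.mono_δ 1 0 (by simp) h2
    have hz : hS.δ 1 0 (by simp) = 0 := by
      rw [← cancel_mono
        (HomologicalComplex.homologyMap (tensorShortComplex Q (syzShortComplex X)).f 0)]
      simp
    have e : IsZero ((tensorShortComplex Q (syzShortComplex X)).X₃.homology 1) :=
      IsZero.of_mono_eq_zero _ hz
    exact e
  | succ i ih =>
    have hS := tensorShortComplex_shortExact Q (syzShortComplex_shortExact X)
    have h2 : IsZero ((tensorShortComplex Q (syzShortComplex X)).X₂.homology (i + 1 + 1)) :=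
      tensorComplex_homology_isZero_of_flat Q (ModuleCat.of R (X →₀ R)) (i + 1)
    have hδ : Mono (hS.δ (i + 1 + 1) (i + 1) (by simp)) := hS.mono_δ _ _ (by simp) h2
    have h1 : IsZero ((tensorShortComplex Q (syzShortComplex X)).X₁.homology (i + 1)) := ih h.syz
    have e : IsZero ((tensorShortComplex Q (syzShortComplex X)).X₃.homology (i + 1 + 1)) :=
      IsZero.of_mono (hS.δ (i + 1 + 1) (i + 1) _) h1
    exact e

lemma TorAcyclic.subsingleton_tor {X : ModuleCat.{u} R} {N : ModuleCat.{u} R}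
    (h : TorAcyclic X N) (i : ℕ) (hi : 1 ≤ i) :
    Subsingleton (((Tor (ModuleCat.{u} R) i).obj X).obj N) := by
  obtain ⟨i, rfl⟩ := Nat.exists_eq_add_of_le' hi
  exact ModuleCat.subsingleton_of_isZero ((h.isZero_homology (projectiveResolution N) i).of_iso
    ((projectiveResolution N).isoLeftDerivedObj _ _))

end

section
open CategoryTheory MonoidalCategory Limits
variable {R : Type u} [CommRing R]

/-- `Tor`-acyclicity passes to filtered colimits, since tensor products commute with colimits and
filtered colimits of modules are computed on underlying sets. -/
lemma TorAcyclic.of_isColimit {J : Type} [SmallCategory J] [IsFiltered J]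
    {X : ModuleCat.{u} R} (F : J ⥤ ModuleCat.{u} R) (c : Cocone F) (hc : IsColimit c)
    (h : ∀ j, TorAcyclic X (F.obj j)) : TorAcyclic X c.pt := by
  intro i
  let f : _root_.syz (_root_.syz^[i] X) ⟶ ModuleCat.of R ((_root_.syz^[i] X : ModuleCat R) →₀ R) :=
    ModuleCat.ofHom (syzInc _)
  change Function.Injective (f ▷ c.pt)
  rw [injective_iff_map_eq_zero]
  intro a ha
  have hF : PreservesFilteredColimitsOfSize.{0, 0} (forget (ModuleCat.{u} R)) :=
    preservesFilteredColimitsOfSize_shrink.{0, u, 0, u} _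
  have : PreservesColimitsOfShape J (forget (ModuleCat.{u} R)) :=
    PreservesFilteredColimitsOfSize.preserves_filtered_colimits J
  let c1 := (tensorLeft (_root_.syz (_root_.syz^[i] X))).mapCocone c
  have hc1 : IsColimit c1 := isColimitOfPreserves _ hc
  let c2 := (tensorLeft (ModuleCat.of R ((_root_.syz^[i] X : ModuleCat R) →₀ R))).mapCocone c
  have hc2 : IsColimit c2 := isColimitOfPreserves _ hc
  obtain ⟨j, a, rfl⟩ := Concrete.isColimit_exists_rep _ hc1 a
  have h2 : c2.ι.app j ((f ▷ F.obj j) a) = c2.ι.app j 0 := by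
    rw [map_zero, ← ha]
    exact ConcreteCategory.congr_hom (whisker_exchange f (c.ι.app j)).symm a
  obtain ⟨k, g, g', hg⟩ := Concrete.isColimit_exists_of_rep_eq _ hc2 _ _ h2
  rw [map_zero] at hg
  have h3 : (f ▷ F.obj k) ((_ ◁ F.map g) a) = 0 :=
    (ConcreteCategory.congr_hom (whisker_exchange f (F.map g)) a).trans hg
  have h4 : (_ ◁ F.map g) a = 0 := h k i (h3.trans (map_zero _).symm)
  rw [← c1.w g]
  exact (congrArg (c1.ι.app k) h4).trans (map_zero _)

end

/-! ### The Hom complex of a projective resolution -/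

section
open CategoryTheory Limits
variable {R : Type u} [CommRing R]

/-- The map of cochain complexes `Hom(K, X) ⟶ Hom(K, Y)` given by postcomposition with `f`. -/
noncomputable def homComplexMap (K : ChainComplex (ModuleCat.{u} R) ℕ) {X Y : ModuleCat.{u} R}
    (f : X ⟶ Y) : K.linearYonedaObj R X ⟶ K.linearYonedaObj R Y where
  f i := ModuleCat.ofHom (Linear.rightComp R (K.X i) f)
  comm' i j _ := by
    refine ModuleCat.hom_ext (LinearMap.ext fun (x : K.X i ⟶ X) => ?_)
    have h : ∀ g : K.X j ⟶ K.X i, g ≫ x ≫ f = (g ≫ x) ≫ f := fun g => (Category.assoc g x f).symm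
    exact h _

/-- The short complex of cochain complexes `Hom(K, S)`. -/
noncomputable def homShortComplex (K : ChainComplex (ModuleCat.{u} R) ℕ)
    (S : ShortComplex (ModuleCat.{u} R)) : ShortComplex (CochainComplex (ModuleCat.{u} R) ℕ) :=
  ShortComplex.mk (homComplexMap K S.f) (homComplexMap K S.g) (by
    refine HomologicalComplex.hom_ext _ _ fun i =>
      ModuleCat.hom_ext (LinearMap.ext fun (x : K.X i ⟶ S.X₁) => ?_)
    have h : (x ≫ S.f) ≫ S.g = 0 := by rw [Category.assoc, S.zero, comp_zero]
    exact h)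

lemma homShortComplex_shortExact {A : ModuleCat.{u} R} (P : ProjectiveResolution A)
    {S : ShortComplex (ModuleCat.{u} R)} (hS : S.ShortExact) :
    (homShortComplex P.complex S).ShortExact := by
  apply HomologicalComplex.shortExact_of_degreewise_shortExact
  intro i
  have := hS.mono_f
  have := hS.epi_g
  have := P.projective i
  refine { exact := (ShortComplex.ShortExact.moduleCat_exact_iff_function_exact _).mpr ?_,
           mono_f := ?_, epi_g := ?_ }
  · intro (x : P.complex.X i ⟶ S.X₂)
    constructor
    · intro (hx : x ≫ S.g = 0)
      exact ⟨hS.exact.lift x hx, hS.exact.lift_f x hx⟩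
    · rintro ⟨(y : P.complex.X i ⟶ S.X₁), rfl⟩
      change (y ≫ S.f) ≫ S.g = 0
      simp
  · refine (ModuleCat.mono_iff_injective _).mpr ?_
    intro (x : P.complex.X i ⟶ S.X₁) y hxy
    exact (cancel_mono S.f).mp hxy
  · refine (ModuleCat.epi_iff_surjective _).mpr ?_
    intro (x : P.complex.X i ⟶ S.X₃)
    exact ⟨Projective.factorThru x S.g, Projective.factorThru_comp x S.g⟩

/-- The map of cochain complexes `Hom(L, X) ⟶ Hom(K, X)` given by precomposition with `f`. -/
noncomputable def homComplexComap {K L : ChainComplex (ModuleCat.{u} R) ℕ} (f : K ⟶ L)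
    (X : ModuleCat.{u} R) : L.linearYonedaObj R X ⟶ K.linearYonedaObj R X where
  f i := ModuleCat.ofHom (Linear.leftComp R X (f.f i))
  comm' i j _ := by
    refine ModuleCat.hom_ext (LinearMap.ext fun (x : L.X i ⟶ X) => ?_)
    change K.d j i ≫ f.f i ≫ x = f.f j ≫ L.d j i ≫ x
    simp

/-- Precomposition with a single morphism `K.X j ⟶ L.X i`, as a map between terms of the Hom
complexes. -/
noncomputable def homComplexComapAux {K L : ChainComplex (ModuleCat.{u} R) ℕ} {i j : ℕ}
    (f : K.X j ⟶ L.X i) (X : ModuleCat.{u} R) :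
    (L.linearYonedaObj R X).X i ⟶ (K.linearYonedaObj R X).X j :=
  ModuleCat.ofHom (Linear.leftComp R X f)

/-- The homotopy between precomposition maps induced by a homotopy of chain maps. -/
noncomputable def homComplexHomotopy {K L : ChainComplex (ModuleCat.{u} R) ℕ} {f g: K ⟶ L}
    (h : Homotopy f g) (X : ModuleCat.{u} R) :
    Homotopy (homComplexComap f X) (homComplexComap g X) where
  hom i j := homComplexComapAux (h.hom j i) X
  zero i j hij := by
    refine ModuleCat.hom_ext (LinearMap.ext fun (x : L.X i ⟶ X) => ?_)
    change h.hom j i ≫ x = 0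
    rw [h.zero j i (fun hh => hij (by simpa using hh))]
    simp
  comm i := by
    have := h.comm i
    cases i with
    | zero =>
      rw [dNext_eq _ (show (ComplexShape.up ℕ).Rel 0 1 from rfl), prevD_eq_zero _ _ (by simp)]
      simp only [Homotopy.prevD_chainComplex, Homotopy.dNext_zero_chainComplex] at this
      refine ModuleCat.hom_ext (LinearMap.ext fun (x : L.X 0 ⟶ X) => ?_)
      change f.f 0 ≫ x = h.hom 0 1 ≫ L.d 1 0 ≫ x + 0 + g.f 0 ≫ x
      rw [this]
      simp
    | succ i =>
      rw [dNext_eq _ (show (ComplexShape.up ℕ).Rel (i + 1) (i + 1 + 1) from rfl),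
        prevD_eq _ (show (ComplexShape.up ℕ).Rel i (i + 1) from rfl)]
      simp only [Homotopy.prevD_chainComplex, Homotopy.dNext_succ_chainComplex] at this
      refine ModuleCat.hom_ext (LinearMap.ext fun (x : L.X (i + 1) ⟶ X) => ?_)
      change f.f (i + 1) ≫ x = h.hom (i + 1) (i + 1 + 1) ≫ L.d (i + 1 + 1) (i + 1) ≫ x +
        K.d (i + 1) i ≫ h.hom i (i + 1) ≫ x + g.f (i + 1) ≫ x
      rw [this]
      simp only [Preadditive.add_comp, Category.assoc]
      abel

/-- If `r` kills `A`, then multiplication by `r` on `N` induces zero on `Ext(A, N)`: it agrees with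
the map induced by multiplication by `r` on a resolution of `A`, which lifts zero and so is
null-homotopic. -/
lemma smul_homology_eq_zero {A : ModuleCat.{u} R} (P : ProjectiveResolution A)
    (r : R) (hr : ∀ a : A, r • a = 0) (N : ModuleCat.{u} R) (i : ℕ) :
    HomologicalComplex.homologyMap (homComplexMap P.complex (r • 𝟙 N)) i = 0 := by
  have h : Homotopy (r • 𝟙 P.complex) 0 :=
    ProjectiveResolution.liftHomotopyZero (P := P) (Q := P) _ (by
    have h1 : r • 𝟙 A = 0 := ModuleCat.hom_ext (LinearMap.ext fun a => hr a)
    have h2 : (r • 𝟙 P.complex) ≫ P.π = P.π ≫ (ChainComplex.single₀ _).map (r • 𝟙 A) := by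
      refine HomologicalComplex.to_single_hom_ext ?_
      simp
      have h3 : ∀ q : P.complex.X 0 ⟶ A, r • q = q ≫ (r • 𝟙 A) := fun q => by simp
      exact h3 _
    rw [h2, h1, Functor.map_zero, comp_zero])
  have h2 : homComplexMap P.complex (r • 𝟙 N) = homComplexComap (r • 𝟙 P.complex) N := by
    refine HomologicalComplex.hom_ext _ _ fun i =>
      ModuleCat.hom_ext (LinearMap.ext fun (x : P.complex.X i ⟶ N) => ?_)
    change x ≫ (r • 𝟙 N) = (r • 𝟙 (P.complex.X i)) ≫ x
    simp
  have h3 : homComplexComap (0 : P.complex ⟶ P.complex) N = 0 := by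
    refine HomologicalComplex.hom_ext _ _ fun i =>
      ModuleCat.hom_ext (LinearMap.ext fun (x : P.complex.X i ⟶ N) => ?_)
    have h : (0 : P.complex.X i ⟶ P.complex.X i) ≫ x = 0 := zero_comp
    exact h
  rw [h2, (homComplexHomotopy h N).homologyMap_eq, h3, HomologicalComplex.homologyMap_zero]

end

/-! ### Rees: `Ext` into a module with a weakly regular sequence -/

section
open CategoryTheory Limits
variable {R : Type u} [CommRing R]

/-- `Ext⁰(A, N) ≅ Hom(A, N)`, in terms of a projective resolution. -/
lemma homologyZero_iso {A : ModuleCat.{u} R} (P : ProjectiveResolution A) (N : ModuleCat.{u} R) :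
    Nonempty ((P.complex.linearYonedaObj R N).homology 0 ≅ ModuleCat.of R (A ⟶ N)) := by
  let q : P.complex.X 0 ⟶ A := P.π.f 0
  have hq : Epi q := inferInstanceAs (Epi (P.π.f 0))
  have hdq : P.complex.d 1 0 ≫ q = 0 := P.complex_d_comp_π_f_zero
  have hex : (ShortComplex.mk (P.complex.d 1 0) q hdq).Exact := P.exact₀
  have hd : ∀ y : A ⟶ N, P.complex.d 1 0 ≫ q ≫ y = 0 := fun y => by
    rw [← Category.assoc, hdq, zero_comp]
  let k : ModuleCat.of R (A ⟶ N) ⟶ (P.complex.linearYonedaObj R N).X 0 :=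
    ModuleCat.ofHom (Linear.leftComp R N q)
  have hk : k ≫ (P.complex.linearYonedaObj R N).d 0 1 = 0 :=
    ModuleCat.hom_ext (LinearMap.ext fun y => hd y)
  let φ := (P.complex.linearYonedaObj R N).liftCycles k 1 (by simp) hk
  have hφ : φ ≫ (P.complex.linearYonedaObj R N).iCycles 0 = k := by simp [φ]
  have hmono : Mono φ := by
    have : Mono k := by
      refine (ModuleCat.mono_iff_injective _).mpr ?_
      intro (x : A ⟶ N) (y : A ⟶ N) (hxy : q ≫ x = q ≫ y)
      exact (cancel_epi q).mp hxy
    have : Mono (φ ≫ (P.complex.linearYonedaObj R N).iCycles 0) := hφ ▸ this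
    exact mono_of_mono φ ((P.complex.linearYonedaObj R N).iCycles 0)
  have hepi : Epi φ := by
    refine (ModuleCat.epi_iff_surjective _).mpr fun z => ?_
    let x : P.complex.X 0 ⟶ N := (P.complex.linearYonedaObj R N).iCycles 0 z
    have hx : P.complex.d 1 0 ≫ x = 0 :=
      ConcreteCategory.congr_hom ((P.complex.linearYonedaObj R N).iCycles_d 0 1) z
    let y : A ⟶ N := hex.desc x hx
    refine ⟨y, ?_⟩
    refine (ModuleCat.mono_iff_injective ((P.complex.linearYonedaObj R N).iCycles 0)).mp
      inferInstance ?_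
    refine (ConcreteCategory.congr_hom hφ y).trans ?_
    exact hex.g_desc x hx
  have : IsIso φ := isIso_of_mono_of_epi φ
  exact ⟨((asIso φ) ≪≫ (P.complex.linearYonedaObj R N).isoHomologyπ₀).symm⟩

open RingTheory.Sequence Pointwise in
/-- If `rs` has length `n`, kills `A` and is weakly regular on `N`, then `Extʲ(A, N) = 0` for
`j < n`, and `Extⁿ(A, N) ≅ Hom(A, N / (rs) N)`. The induction uses the long exact sequence of
`0 → N → N → N / r N → 0`, in which multiplication by `r` acts as zero on `Ext(A, N)`. -/
lemma rees {A : ModuleCat.{u} R} (P : ProjectiveResolution A) (rs : List R)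
    (hA : ∀ r ∈ rs, ∀ a : A, r • a = 0) (N : Type u) [AddCommGroup N] [Module R N]
    (hN : IsWeaklyRegular N rs) :
    (∀ j < rs.length, IsZero ((P.complex.linearYonedaObj R (ModuleCat.of R N)).homology j)) ∧
    Nonempty ((P.complex.linearYonedaObj R (ModuleCat.of R N)).homology rs.length ≅
      ModuleCat.of R (A ⟶ ModuleCat.of R (N ⧸ (Ideal.ofList rs • ⊤ : Submodule R N)))) := by
  induction rs generalizing N with
  | nil =>
    refine ⟨fun j hj => absurd hj (by simp), ?_⟩
    obtain ⟨e⟩ := homologyZero_iso P (ModuleCat.of R N)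
    have e' : N ≃ₗ[R] N ⧸ (Ideal.ofList ([] : List R) • ⊤ : Submodule R N) :=
      (Submodule.quotEquivOfEqBot _ (by rw [Ideal.ofList_nil, Submodule.bot_smul])).symm
    exact ⟨e ≪≫ ((linearCoyoneda R (ModuleCat.{u} R)).obj (.op A)).mapIso e'.toModuleIso⟩
  | cons r rs ih =>
    rw [isWeaklyRegular_cons_iff] at hN
    obtain ⟨ih1, ⟨e⟩⟩ := ih (fun s hs => hA s (by simp [hs])) (QuotSMulTop r N) hN.2
    let S := ModuleCat.smulShortComplex (ModuleCat.of R N) r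
    have hS : S.ShortExact := IsSMulRegular.smulShortComplex_shortExact hN.1
    have hT := homShortComplex_shortExact P hS
    have h0 : ∀ j, HomologicalComplex.homologyMap (homShortComplex P.complex S).f j = 0 :=
      fun j => smul_homology_eq_zero P r (hA r (by simp)) (ModuleCat.of R N) j
    have hepi : ∀ j, Epi (hT.δ j (j + 1) rfl) := fun j =>
      (hT.homology_exact₁ j (j + 1) rfl).epi_f (h0 _)
    have hz : ∀ j < (r :: rs).length,
        IsZero ((P.complex.linearYonedaObj R (ModuleCat.of R N)).homology j) := by
      intro j hj
      cases j with
      | zero =>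
        obtain ⟨e0⟩ := homologyZero_iso P (ModuleCat.of R N)
        refine IsZero.of_iso ?_ e0
        have : Subsingleton (A ⟶ ModuleCat.of R N) := by
          refine subsingleton_of_forall_eq 0 fun y => ModuleCat.hom_ext (LinearMap.ext fun a => ?_)
          refine hN.1 ?_
          change r • y a = r • (0 : N)
          rw [smul_zero]
          refine (y.hom.map_smul r a).symm.trans ?_
          rw [hA r (by simp) a, map_zero]
        exact ModuleCat.isZero_of_subsingleton _
      | succ j =>
        have : Epi (hT.δ j (j + 1) rfl) := hepi j
        have h5 := IsZero.of_epi (hT.δ j (j + 1) rfl) (ih1 j (by simpa using hj))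
        exact h5
    refine ⟨hz, ?_⟩
    have : Epi (hT.δ rs.length (rs.length + 1) rfl) := hepi _
    have : Mono (hT.δ rs.length (rs.length + 1) rfl) :=
      (hT.homology_exact₃ rs.length (rs.length + 1) rfl).mono_g
        ((hz rs.length (by simp)).eq_of_src _ _)
    have : IsIso (hT.δ rs.length (rs.length + 1) rfl) := isIso_of_mono_of_epi _
    let e' := (Submodule.quotOfListConsSMulTopEquivQuotSMulTopInner N r rs).symm.toModuleIso
    exact ⟨(asIso (hT.δ rs.length (rs.length + 1) rfl)).symm ≪≫ e ≪≫
      ((linearCoyoneda R (ModuleCat.{u} R)).obj (.op A)).mapIso e'⟩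

end

/-! ### Systems of parameters -/

lemma length_eq_krullDim {R : Type u} [CommRing R] [IsNoetherianRing R] [IsLocalRing R] {d : ℕ}
    (hd : ringKrullDim R = d) (rs : List R) (hreg : RingTheory.Sequence.IsRegular R rs)
    (hart : IsArtinianRing (R ⧸ Ideal.ofList rs)) : rs.length = d := by
  have h1 := ringKrullDim_add_length_eq_ringKrullDim_of_isRegular rs hreg
  have : Nontrivial (R ⧸ Ideal.ofList rs) := by
    refine Ideal.Quotient.nontrivial_iff.mpr fun h => hreg.2 ?_
    simp [h]
  have h0 : ringKrullDim (R ⧸ Ideal.ofList rs) = 0 := by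
    exact ringKrullDimZero_iff_ringKrullDim_eq_zero.mp inferInstance
  rw [h0, zero_add, hd] at h1
  exact_mod_cast h1

lemma le_radical_of_artinian {R : Type u} [CommRing R] [IsLocalRing R] (I : Ideal R)
    (hart : IsArtinianRing (R ⧸ I)) : maximalIdeal R ≤ I.radical := by
  rw [Ideal.radical_eq_sInf]
  refine le_sInf ?_
  rintro P ⟨hIP, hP⟩
  have : IsArtinianRing (R ⧸ P) :=
    (Ideal.Quotient.factor_surjective hIP).isArtinianRing
  have : P.IsMaximal := Ideal.Quotient.maximal_of_isField _ (IsArtinianRing.isField_of_isDomain _)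
  exact (IsLocalRing.eq_maximalIdeal this).ge

/-! ### Local cohomology as a colimit over powers of a regular sequence -/

section
open CategoryTheory Limits
variable {R : Type u} [CommRing R]

/-- The diagram `t ↦ (r₁ᵗ, …, rₙᵗ)`, valued in the ideals whose radical contains the maximal
ideal. -/
def listPowDiagram [IsLocalRing R] (rs : List R) (h : maximalIdeal R ≤ (Ideal.ofList rs).radical) :
    ℕᵒᵖ ⥤ localCohomology.SelfLERadical (maximalIdeal R) :=
  ObjectProperty.lift _
    { obj t := Ideal.ofList (rs.map (· ^ t.unop))
      map {s t} w := ⟨⟨by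
        refine Ideal.span_le.mpr ?_
        intro x hx
        obtain ⟨r, hr, rfl⟩ := List.mem_map.mp hx
        exact Ideal.mem_of_dvd _ (pow_dvd_pow r w.unop.le)
          (Ideal.subset_span (List.mem_map.mpr ⟨r, hr, rfl⟩))⟩⟩ : ℕᵒᵖ ⥤ Ideal R }
    fun t => by
      refine h.trans (Ideal.radical_le_radical_iff.mpr (Ideal.span_le.mpr fun r hr => ?_))
      exact ⟨t.unop, Ideal.subset_span (List.mem_map.mpr ⟨r, hr, rfl⟩)⟩

lemma listPowDiagram_initial [IsLocalRing R] [IsNoetherianRing R] (rs : List R)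
    (h : maximalIdeal R ≤ (Ideal.ofList rs).radical) (hrs : ∀ r ∈ rs, ¬ IsUnit r) :
    (listPowDiagram rs h).Initial where
  out J' := by
    apply +allowSynthFailures zigzag_isConnected
    · obtain ⟨k, hk⟩ := Ideal.exists_pow_le_of_le_radical_of_fg J'.2
        (isNoetherian_def.mp inferInstance _)
      have hk' : Ideal.ofList (rs.map (· ^ k)) ≤ J'.1 := by
        refine le_trans (Ideal.span_le.mpr fun x hx => ?_) hk
        obtain ⟨r, hr, rfl⟩ := List.mem_map.mp hx
        exact Ideal.pow_mem_pow ((mem_maximalIdeal r).mpr (hrs r hr)) k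
      exact ⟨CostructuredArrow.mk (⟨⟨⟨hk'⟩⟩⟩ : (listPowDiagram rs h).obj (.op k) ⟶ J')⟩
    · intro j1 j2
      apply Relation.ReflTransGen.single
      rcases le_total j1.left.unop j2.left.unop with h | h
      · right; exact ⟨CostructuredArrow.homMk (homOfLE h).op rfl⟩
      · left; exact ⟨CostructuredArrow.homMk (homOfLE h).op rfl⟩

/-- The local cohomology `H^i_m(M)` is the filtered colimit of `Extⁱ(R / (rsᵗ), M)`, so it is
acyclic as soon as each of these modules is. -/
lemma localCohomology_torAcyclic [IsLocalRing R] [IsNoetherianRing R] (rs : List R)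
    (h : maximalIdeal R ≤ (Ideal.ofList rs).radical) (hrs : ∀ r ∈ rs, ¬ IsUnit r) (i : ℕ)
    (X M : ModuleCat.{u} R)
    (hX : ∀ t : ℕ, TorAcyclic X (((Ext R (ModuleCat.{u} R) i).obj
      (.op (ModuleCat.of R (R ⧸ Ideal.ofList (rs.map (· ^ t)))))).obj M)) :
    TorAcyclic X ((localCohomology (maximalIdeal R) i).obj M) := by
  let I := listPowDiagram rs h ⋙ localCohomology.selfLERadicalDiagram (maximalIdeal R)
  have := listPowDiagram_initial rs h hrs
  have e : localCohomology.ofDiagram.{u, 0} I i ≅ localCohomology (maximalIdeal R) i :=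
    localCohomology.isoOfFinal.{u, u, 0} (listPowDiagram rs h)
      (localCohomology.selfLERadicalDiagram (maximalIdeal R)) i ≪≫
    localCohomology.isoSelfLERadical (maximalIdeal R) i
  refine TorAcyclic.of_equiv (e.app M).toLinearEquiv ?_
  have := localCohomology.hasColimitDiagram.{u, 0} I i
  let c := ((evaluation _ _).obj M).mapCocone (colimit.cocone (localCohomology.diagram I i))
  have hc : IsColimit c := isColimitOfPreserves _ (colimit.isColimit _)
  exact TorAcyclic.of_isColimit _ c hc fun t => hX t.unop.unop

/-- Evaluation at `1` identifies `End_R(R / I)` with `R / I`. -/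
lemma endQuotient_evalOne_bijective (I : Ideal R) :
    Function.Bijective (LinearMap.applyₗ (R := R) (M := R ⧸ I) (M₂ := R ⧸ I) 1) := by
  refine ⟨fun f g hfg => LinearMap.ext fun x => ?_, fun y =>
    ⟨LinearMap.mulLeft R y, by simp⟩⟩
  obtain ⟨x, rfl⟩ := Ideal.Quotient.mk_surjective x
  have hx : Ideal.Quotient.mk I x = x • (1 : R ⧸ I) := by
    rw [Algebra.smul_def, mul_one]; rfl
  rw [hx, map_smul, map_smul]
  exact congrArg (x • ·) hfg

open RingTheory.Sequence in
/-- For a weakly regular sequence `xs` of length `n` one has `Extⁿ(R / (xs), R) ≅ R / (xs)`, which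
is acyclic with respect to every `X` on which `xs` is weakly regular. -/
lemma torAcyclic_ext (xs : List R) (hxs : IsWeaklyRegular R xs) (X : ModuleCat.{u} R)
    (hX : IsWeaklyRegular X xs) :
    TorAcyclic X (((Ext R (ModuleCat.{u} R) xs.length).obj
      (.op (ModuleCat.of R (R ⧸ Ideal.ofList xs)))).obj (ModuleCat.of R R)) := by
  let A := ModuleCat.of R (R ⧸ Ideal.ofList xs)
  let P := projectiveResolution A
  obtain ⟨-, ⟨e⟩⟩ := rees P xs (fun r hr a => by
    obtain ⟨a, rfl⟩ := Ideal.Quotient.mk_surjective a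
    refine Ideal.Quotient.eq_zero_iff_mem.mpr ?_
    exact Ideal.mul_mem_right _ _ (Ideal.subset_span hr)) R hxs
  have e1 := ((P.isoExt xs.length (ModuleCat.of R R)) ≪≫ e).toLinearEquiv
  have hI : (Ideal.ofList xs • ⊤ : Submodule R R) = Ideal.ofList xs := by simp
  have e2 : (R ⧸ (Ideal.ofList xs • ⊤ : Submodule R R)) ≃ₗ[R]
      (A ⟶ ModuleCat.of R (R ⧸ (Ideal.ofList xs • ⊤ : Submodule R R))) := by
    rw [hI]
    exact ((ModuleCat.homLinearEquiv (S := R)).trans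
      (LinearEquiv.ofBijective _ (endQuotient_evalOne_bijective (Ideal.ofList xs)))).symm
  refine TorAcyclic.of_equiv (e2.trans e1.symm) ?_
  refine TorAcyclic.quot_ofList xs (TorAcyclic.of_flat X R) hxs ?_
  exact ((TensorProduct.rid R X).isWeaklyRegular_congr xs).mpr hX

open RingTheory.Sequence in
/-- Elements `r` act on `FrobTwist R p` as `r ^ p`, so this is the regularity of `p`-th powers. -/
lemma isWeaklyRegular_frobTwist (p : ℕ) [Fact p.Prime] [CharP R p] (rs : List R)
    (h : IsWeaklyRegular R rs) : IsWeaklyRegular (FrobTwist R p) rs := by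
  rw [← isWeaklyRegular_map_algebraMap_iff (FrobTwist R p)]
  exact isWeaklyRegular_pow rs h p

end

/-- Let `(R, m)` be a Noetherian local ring of prime characteristic `p` and
Krull dimension `d`.  If `R` is Cohen–Macaulay, then `Tor_i^R(R^f, H^d_m(R)) = 0` for all
`i ≥ 1`. -/
theorem tor_frobTwist_localCohomology_subsingleton (R : Type u) [CommRing R]
    [IsNoetherianRing R] [IsLocalRing R] (p : ℕ) [Fact p.Prime] [CharP R p]
    (d : ℕ) (hd : ringKrullDim R = d) (hCM : IsCohenMacaulayLocalRing R)
    (i : ℕ) (hi : 1 ≤ i) :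
    Subsingleton
      (((CategoryTheory.Tor (ModuleCat.{u} R) i).obj (ModuleCat.of R (FrobTwist R p))).obj
        ((localCohomology (maximalIdeal R) d).obj (ModuleCat.of R R))) := by
  obtain ⟨rs, hrs, hreg, hart⟩ := hCM
  obtain rfl := length_eq_krullDim hd rs hreg hart
  refine TorAcyclic.subsingleton_tor ?_ i hi
  refine localCohomology_torAcyclic rs (le_radical_of_artinian _ hart) hrs _ _ _ fun t => ?_
  have h := isWeaklyRegular_pow rs hreg.toIsWeaklyRegular t
  have h1 := torAcyclic_ext _ h (ModuleCat.of R (FrobTwist R p))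
    (isWeaklyRegular_frobTwist p _ h)
  rwa [List.length_map] at h1
end

section
/- Let R be a commutative Noetherian ring of prime characteristic p which is FPI, and let S be a multiplicatively closed subset of R. Then the localization R_S is FPI. -/
/-!
The proof moves the question from `R_S` down to `R` and back. Let `I` be an injective
`R_S`-module.

* Since `R_S` is flat over `R`, `I` is injective over `R` (`Module.Injective.restrict_of_flat`),
  so `F_R(I)` is an injective `R`-module by hypothesis.
* Inverting `{s ^ p | s ∈ S}` is the same as inverting `S`, so the Frobenius of `R_S` is the base
  change of the Frobenius of `R` (`FrobTwist.isPushout`). Cancelling this base change gives an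
  `R`-linear isomorphism `F_{R_S}(I) ≃ F_R(I)` (`FrobModule.equivLocalization`).
* Hence `F_{R_S}(I)` is an `R_S`-module that is injective over `R`. As `R`-linear maps between
  `R_S`-modules are `R_S`-linear, it is injective over `R_S`
  (`Module.Injective.of_restrict_localization`).
-/

open TensorProduct IsLocalRing

universe u v

/-- A ring of prime characteristic `p` is FPI (`Frobenius Preserves Injectives`) if the
Frobenius functor takes every injective module to an injective module. -/
def IsFPI (R : Type u) [CommRing R] (p : ℕ) [Fact p.Prime] [CharP R p] : Prop :=
  ∀ (I : Type u) [AddCommGroup I] [Module R I],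
    Module.Injective R I → Module.Injective R (FrobModule R p I)

/-- Restriction of scalars along a flat ring homomorphism preserves injectivity, being right
adjoint to the exact functor `A ⊗[R] -`. -/
lemma Module.Injective.restrict_of_flat (R A I : Type u) [CommRing R] [CommRing A] [Algebra R A]
    [Module.Flat R A] [AddCommGroup I] [Module R I] [Module A I] [IsScalarTower R A I]
    (hI : Module.Injective A I) : Module.Injective R I where
  out X Y _ _ _ _ f hf g := by
    obtain ⟨k, hk⟩ := hI.out (f.baseChange A) (Module.Flat.lTensor_preserves_injective_linearMap f hf)
      (g.liftBaseChange A)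
    refine ⟨k.restrictScalars R ∘ₗ TensorProduct.mk R A Y 1, fun x ↦ ?_⟩
    simpa using hk (1 ⊗ₜ x)

/-- An `R`-linear extension of an `A`-linear map between modules over the localization `A` is
automatically `A`-linear, so injectivity over `R` gives injectivity over `A`. -/
lemma Module.Injective.of_restrict_localization (R A I : Type u) [CommRing R] [CommRing A]
    [Algebra R A] (S : Submonoid R) [IsLocalization S A] [AddCommGroup I] [Module R I]
    [Module A I] [IsScalarTower R A I] (hI : Module.Injective R I) : Module.Injective A I where
  out X Y _ _ _ _ f hf g := by
    let := Module.compHom X (algebraMap R A)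
    let := Module.compHom Y (algebraMap R A)
    have : IsScalarTower R A X := IsScalarTower.of_algebraMap_smul fun _ _ ↦ rfl
    have : IsScalarTower R A Y := IsScalarTower.of_algebraMap_smul fun _ _ ↦ rfl
    obtain ⟨k, hk⟩ := hI.out (f.restrictScalars R) hf (g.restrictScalars R)
    exact ⟨k.extendScalarsOfIsLocalization S A, hk⟩

/-- A localization at `S` is also a localization at any submonoid `M ≤ S` such that every element
of `S` divides an element of `M`. -/
lemma IsLocalization.of_le_of_dvd {R A : Type u} [CommRing R] [CommRing A] [Algebra R A]
    (S M : Submonoid R) [IsLocalization S A] (hM : M ≤ S) (hdvd : ∀ s ∈ S, ∃ m ∈ M, s ∣ m) :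
    IsLocalization M A where
  map_units m := IsLocalization.map_units A (⟨m, hM m.2⟩ : S)
  surj z := by
    obtain ⟨⟨x, s⟩, hx⟩ := IsLocalization.surj S z
    obtain ⟨m, hm, c, rfl⟩ := hdvd s s.2
    refine ⟨⟨x * c, ⟨_, hm⟩⟩, ?_⟩
    simp only [map_mul] at hx ⊢
    rw [← mul_assoc, hx]
  exists_of_eq {x y} hxy := by
    obtain ⟨s, hs⟩ := (IsLocalization.eq_iff_exists S A).1 hxy
    obtain ⟨m, hm, c, rfl⟩ := hdvd s s.2
    refine ⟨⟨_, hm⟩, ?_⟩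
    change (s : R) * c * x = s * c * y
    linear_combination c * hs

section Localization

variable (R : Type u) [CommRing R] (p : ℕ) [Fact p.Prime] [CharP R p] (S : Submonoid R)
  [CharP (Localization S) p]

/-- The localization map `R → R_S` as an algebra structure between the Frobenius twists. -/
noncomputable instance FrobTwist.algebraTwist :
    Algebra (FrobTwist R p) (FrobTwist (Localization S) p) :=
  inferInstanceAs (Algebra R (Localization S))

/-- The twist of `R_S` as an `R`-algebra via `R → R_S` followed by the Frobenius of `R_S`. -/
noncomputable instance FrobTwist.algebraBase : Algebra R (FrobTwist (Localization S) p) :=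
  ((algebraMap (Localization S) (FrobTwist (Localization S) p)).comp
    (algebraMap R (Localization S))).toAlgebra

instance FrobTwist.isScalarTower_localization :
    IsScalarTower R (Localization S) (FrobTwist (Localization S) p) :=
  IsScalarTower.of_algebraMap_eq fun _ ↦ rfl

instance FrobTwist.isScalarTower_twist :
    IsScalarTower R (FrobTwist R p) (FrobTwist (Localization S) p) :=
  IsScalarTower.of_algebraMap_eq fun r ↦ (map_pow (algebraMap R (Localization S)) r p).symm

/-- The image of `S` in the twist of `R` is `{s ^ p | s ∈ S}`, and inverting it is the same as
inverting `S`. -/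
instance FrobTwist.isLocalization :
    IsLocalization (Algebra.algebraMapSubmonoid (FrobTwist R p) S)
      (FrobTwist (Localization S) p) := by
  have key : IsLocalization (S.map (frobenius R p)) (Localization S) := by
    refine IsLocalization.of_le_of_dvd S _ ?_ fun s hs ↦
      ⟨s ^ p, ⟨s, hs, rfl⟩, dvd_pow_self s (Fact.out : p.Prime).ne_zero⟩
    rintro _ ⟨s, hs, rfl⟩
    exact pow_mem hs p
  exact key

/-- The Frobenius of `R_S` is the base change of the Frobenius of `R`. -/
instance FrobTwist.isPushout :
    Algebra.IsPushout R (FrobTwist R p) (Localization S) (FrobTwist (Localization S) p) :=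
  Algebra.isPushout_of_isLocalization S _ _ _

/-- `F_{R_S}(I)` as an `R`-module by restriction of scalars along `R → R_S`. -/
noncomputable instance FrobModule.moduleBase (I : Type u) [AddCommGroup I]
    [Module (Localization S) I] : Module R (FrobModule (Localization S) p I) :=
  Module.compHom _ (algebraMap R (Localization S))

instance FrobModule.isScalarTower (I : Type u) [AddCommGroup I] [Module (Localization S) I] :
    IsScalarTower R (Localization S) (FrobModule (Localization S) p I) :=
  IsScalarTower.of_algebraMap_smul fun _ _ ↦ rfl

/-- The canonical isomorphism `F_R(I) ≃ F_{R_S}(I)` for an `R_S`-module `I`. It is linear over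
`R` acting on the left tensor factors, which is linearity over the ring `FrobTwist R p` in
`Algebra.IsPushout.cancelBaseChange`. -/
noncomputable def FrobModule.equivLocalization (I : Type u) [AddCommGroup I] [Module R I]
    [Module (Localization S) I] [IsScalarTower R (Localization S) I] :
    FrobModule R p I ≃ₗ[R] FrobModule (Localization S) p I :=
  let e := (Algebra.IsPushout.cancelBaseChange R (FrobTwist R p) (Localization S)
    (FrobTwist (Localization S) p) I).symm
  { toFun := e
    invFun := e.symm
    left_inv := e.left_inv
    right_inv := e.right_inv
    map_add' := e.map_add
    map_smul' := fun r x ↦ by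
      refine (e.map_smul (FrobTwist.of R p r) x).trans ?_
      exact (algebraMap_smul (FrobTwist (Localization S) p) (FrobTwist.of R p r) (e x)).symm }

end Localization

/-- Let `R` be a commutative Noetherian ring of prime characteristic `p`
which is FPI, and `S` a multiplicatively closed subset of `R`.  Then the localization `R_S`
is FPI.  (The characteristic-`p` assumption on `R_S` is needed to speak of its Frobenius.) -/
theorem isFPI_localization (R : Type u) [CommRing R] [IsNoetherianRing R]
    (p : ℕ) [Fact p.Prime] [CharP R p] (S : Submonoid R) [CharP (Localization S) p]
    (h : IsFPI R p) : IsFPI (Localization S) p := by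
  intro I _ _ hI
  let := Module.compHom I (algebraMap R (Localization S))
  have : IsScalarTower R (Localization S) I := IsScalarTower.of_algebraMap_smul fun _ _ ↦ rfl
  have : Module.Flat R (Localization S) := IsLocalization.flat _ S
  have hF : Module.Injective R (FrobModule R p I) :=
    h I (Module.Injective.restrict_of_flat R (Localization S) I hI)
  have hF' : Module.Injective R (FrobModule (Localization S) p I) :=
    Module.Baer.injective
      ((Module.Baer.of_injective hF).of_equiv (FrobModule.equivLocalization R p S I))
  exact Module.Injective.of_restrict_localization R (Localization S) _ S hF'
end

section
/- Let R be a commutative Noetherian ring of prime characteristic p which is FPI. Then R is generically Gorenstein, i.e., R_P is a Gorenstein local ring for every minimal prime P of R. -/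
/-!
The idea is to iterate the Frobenius functor on one injective module until it becomes free over
`A = R_P`. As `P` is minimal, `A` is Artinian local, so some iterate `f^n` of its Frobenius
kills the maximal ideal `𝔪` and factors as `A → k → A`. Hence for an `A`-module `I` the module
`F^n(I) = A ⊗_k (I / 𝔪 I)` is free over `A`, and nonzero if `I ≠ 0`, since `𝔪` is nilpotent.

The module `I` is the character module of `A`: it is injective over `R`, because `A` is flat over
`R`. By FPI, `F^n(I)` is injective over `R`, so its direct summand `A` is too; since `A` is a
localization of `R`, this makes `A` self-injective. The empty regular sequence then witnesses that
`A` is Gorenstein.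

Instead of identifying `F^n(I)` with a free module, the induction carries a `p ^ n`-semilinear map
`J → A` taking the value `1`. Such a map exists on `I` by way of a functional `I / 𝔪 I → k`
(`exists_semilinear_of_isArtinianRing`); each application of `F` lowers the exponent by one
(`exists_semilinear_frobModule`) and keeps the action of the denominators invertible
(`isUnit_algebraMap_end_frobModule`). At exponent zero, the map is `R`-linear and exhibits `A` as a
retract of an injective module (`injective_self_of_retract`).
-/

open TensorProduct IsLocalRing

universe u v

/-- A ring is a Gorenstein local ring if it is Noetherian local and some regular sequence of
nonunits has a quotient which is Artinian and self-injective (equivalently, `A` is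
Cohen–Macaulay and the quotient by a maximal regular sequence is a zero-dimensional
Gorenstein ring). -/
def IsGorensteinLocalRing (A : Type u) [CommRing A] : Prop :=
  IsNoetherianRing A ∧ IsLocalRing A ∧
    ∃ rs : List A, (∀ r ∈ rs, ¬ IsUnit r) ∧ RingTheory.Sequence.IsRegular A rs ∧
      IsArtinianRing (A ⧸ Ideal.span {x | x ∈ rs}) ∧
      Module.Injective (A ⧸ Ideal.span {x | x ∈ rs}) (A ⧸ Ideal.span {x | x ∈ rs})

/-- If `A` is a localization of `R` and `A` is a retract (through `φ` and `x ↦ 1`) of an injective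
`R`-module on which the denominators act invertibly, then `A` is self-injective. -/
lemma injective_self_of_retract {R : Type u} [CommRing R] (S : Submonoid R) {A : Type u}
    [CommRing A] [Algebra R A] [IsLocalization S A]
    (J : Type u) [AddCommGroup J] [Module R J] (hJ : Module.Injective R J)
    (hS : ∀ s : S, IsUnit (algebraMap R (Module.End R J) s))
    (φ : J →ₗ[R] A) (x : J) (hx : φ x = 1) : Module.Injective A A := by
  let σ : A →ₗ[R] J :=
    IsLocalizedModule.lift S (Algebra.linearMap R A) (LinearMap.toSpanSingleton R J x) hS
  have hσ1 : σ 1 = x := by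
    have := IsLocalizedModule.lift_apply S (Algebra.linearMap R A)
      (LinearMap.toSpanSingleton R J x) hS 1
    simpa [σ] using this
  -- an `R`-linear endomorphism of `A` is automatically `A`-linear
  have hφσ : ∀ a, φ (σ a) = a := fun a => by
    have := ((φ ∘ₗ σ).extendScalarsOfIsLocalization S A).map_smul a 1
    simpa [hσ1, hx] using this
  apply Module.Baer.injective
  intro I g
  obtain ⟨h, hh⟩ := Module.Injective.extension_property R J I A
    (I.subtype.restrictScalars R) I.injective_subtype (σ ∘ₗ g.restrictScalars R)
  refine ⟨(φ ∘ₗ h).extendScalarsOfIsLocalization S A, fun y hy => ?_⟩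
  have := LinearMap.congr_fun hh ⟨y, hy⟩
  simp only [LinearMap.comp_apply, LinearMap.restrictScalars_apply, Submodule.subtype_apply]
    at this
  simp [this, hφσ]

section Frobenius

variable {R : Type u} [CommRing R] {p : ℕ} [Fact p.Prime] [CharP R p]

section API

variable {J : Type u} [AddCommGroup J] [Module R J]

/-- The pure tensor `r ⊗ j` in `F_R(J)`, with `r` regarded as an element of `R`. -/
noncomputable def frobTmul (p : ℕ) [Fact p.Prime] [CharP R p] (r : R) (j : J) : FrobModule R p J :=
  FrobTwist.of R p r ⊗ₜ[R] j

lemma frobModule_induction {motive : FrobModule R p J → Prop} (z : FrobModule R p J)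
    (zero : motive 0) (tmul : ∀ (r : R) (j : J), motive (frobTmul p r j))
    (add : ∀ x y, motive x → motive y → motive (x + y)) : motive z :=
  TensorProduct.induction_on (motive := motive) z zero tmul add

lemma smul_frobTmul (r s : R) (j : J) : r • frobTmul p s j = frobTmul p (r * s) j := rfl

lemma frobTmul_smul (r s : R) (j : J) : frobTmul p s (r • j) = r ^ p • frobTmul p s j := by
  have h1 : (FrobTwist.of R p s ⊗ₜ[R] (r • j) : FrobTwist R p ⊗[R] J) =
      (r • FrobTwist.of R p s) ⊗ₜ[R] j := (TensorProduct.smul_tmul _ _ _).symm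
  have h2 : r • FrobTwist.of R p s = FrobTwist.of R p (r ^ p * s) := by
    rw [Algebra.smul_def]; rfl
  rw [h2] at h1
  exact h1

/-- A biadditive map satisfying the Frobenius-twisted balancing condition descends to `F_R(J)`. -/
lemma exists_frobModule_lift {B : Type*} [AddCommGroup B] (m : R →+ J →+ B)
    (hm : ∀ (r s : R) (j : J), m (r ^ p * s) j = m s (r • j)) :
    ∃ ψ : FrobModule R p J →+ B, ∀ r j, ψ (frobTmul p r j) = m r j := by
  have hbal : ∀ (r : R) (s : FrobTwist R p) (j : J),
      (show FrobTwist R p →+ J →+ B from m) (r • s) j =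
        (show FrobTwist R p →+ J →+ B from m) s (r • j) := by
    intro r s j
    rw [Algebra.smul_def]
    exact hm r s j
  exact ⟨TensorProduct.liftAddHom (show FrobTwist R p →+ J →+ B from m) hbal,
    fun r j => TensorProduct.liftAddHom_tmul (show FrobTwist R p →+ J →+ B from m) hbal r j⟩

/-- Functoriality of `F_R`. -/
lemma exists_frobModule_map (g : J →ₗ[R] J) :
    ∃ G : FrobModule R p J →+ FrobModule R p J,
      ∀ r j, G (frobTmul p r j) = frobTmul p r (g j) :=
  ⟨(g.lTensor (FrobTwist R p)).toAddMonoidHom,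
    fun r j => LinearMap.lTensor_tmul (FrobTwist R p) g r j⟩

end API

variable (J : Type u) [AddCommGroup J] [Module R J]

/-- The Frobenius functor turns multiplication by `s` into multiplication by `s ^ p`, so it
preserves invertibility of the action of `s`. -/
lemma isUnit_algebraMap_end_frobModule (s : R) (hs : IsUnit (algebraMap R (Module.End R J) s)) :
    IsUnit (algebraMap R (Module.End R (FrobModule R p J)) s) := by
  obtain ⟨u, hu⟩ := hs
  have h1 : ∀ j, s • (u⁻¹ : (Module.End R J)ˣ).1 j = j := fun j => by
    have := LinearMap.congr_fun u.mul_inv j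
    rwa [hu] at this
  have h2 : ∀ j, (u⁻¹ : (Module.End R J)ˣ).1 (s • j) = j := fun j => by
    rw [map_smul, h1]
  obtain ⟨G, hG⟩ := exists_frobModule_map (p := p) (u⁻¹ : (Module.End R J)ˣ).1
  rw [← isUnit_pow_iff (Fact.out : p.Prime).ne_zero, ← map_pow, Module.End.isUnit_iff]
  refine Function.bijective_iff_has_inverse.2 ⟨G, fun z => ?_, fun z => ?_⟩
  · rw [Module.algebraMap_end_apply]
    induction z using frobModule_induction with
    | zero => rw [smul_zero, map_zero]
    | tmul r j => rw [← frobTmul_smul, hG, h2]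
    | add x y hx hy => rw [smul_add, map_add, hx, hy]
  · rw [Module.algebraMap_end_apply]
    induction z using frobModule_induction with
    | zero => rw [map_zero, smul_zero]
    | tmul r j => rw [hG, ← frobTmul_smul, h1]
    | add x y hx hy => rw [map_add, smul_add, hx, hy]

/-- A `p ^ (n + 1)`-semilinear map `φ` out of `J` induces a `p ^ n`-semilinear map out of `F_R(J)`,
namely `r ⊗ j ↦ r ^ (p ^ n) • φ j`, whose image contains that of `φ`. -/
lemma exists_semilinear_frobModule {A : Type u} [CommRing A] [Algebra R A] [CharP A p] (n : ℕ)
    (φ : J →+ A) (hφ : ∀ (r : R) (j : J), φ (r • j) = r ^ p ^ (n + 1) • φ j) :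
    ∃ ψ : FrobModule R p J →+ A, (∀ (r : R) (z), ψ (r • z) = r ^ p ^ n • ψ z) ∧
      ∀ j, ∃ z, ψ z = φ j := by
  let m : R →+ J →+ A :=
    AddMonoidHom.compl₂ (AddMonoidHom.comp (AddMonoidHom.mul (R := A))
      ((iterateFrobenius A p n).comp (algebraMap R A)).toAddMonoidHom) φ
  have hm : ∀ (r : R) (j : J), m r j = r ^ p ^ n • φ j := by
    intro r j
    rw [Algebra.smul_def, map_pow]
    rfl
  obtain ⟨ψ, hψ⟩ := exists_frobModule_lift (p := p) m fun r s j => by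
    rw [hm, hm, hφ, smul_smul]
    congr 1
    ring
  refine ⟨ψ, fun r z => ?_, fun j => ⟨frobTmul p 1 j, by rw [hψ, hm, one_pow, one_smul]⟩⟩
  induction z using frobModule_induction with
  | zero => rw [smul_zero, map_zero, smul_zero]
  | tmul s j => rw [smul_frobTmul, hψ, hψ, hm, hm, mul_pow, mul_smul]
  | add x y hx hy => rw [smul_add, map_add, map_add, smul_add, hx, hy]

/-- Applying the Frobenius functor `n` times to an injective module `J` which carries a
`p ^ n`-semilinear map to the localization `A` hitting `1` exhibits `A` as a retract of an
injective module. -/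
lemma injective_self_of_semilinear (h : IsFPI R p) (S : Submonoid R) {A : Type u}
    [CommRing A] [Algebra R A] [IsLocalization S A] [CharP A p] (n : ℕ)
    (hJ : Module.Injective R J)
    (hS : ∀ s : S, IsUnit (algebraMap R (Module.End R J) s))
    (φ : J →+ A) (hφ : ∀ (r : R) (j : J), φ (r • j) = r ^ p ^ n • φ j)
    (x : J) (hx : φ x = 1) : Module.Injective A A := by
  induction n generalizing J with
  | zero =>
    exact injective_self_of_retract S J hJ hS
      { φ with map_smul' := fun r j => by simpa using hφ r j } x hx
  | succ n ih =>
    obtain ⟨ψ, hψ, hz⟩ := exists_semilinear_frobModule (p := p) J n φ hφ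
    obtain ⟨z, hz⟩ := hz x
    exact ih (FrobModule R p J) (h J hJ)
      (fun s => isUnit_algebraMap_end_frobModule J _ (hS s)) ψ hψ z (hz.trans hx)

end Frobenius

/-- Over an Artinian local ring of characteristic `p`, every nonzero module `I` has, for some `n`,
a `p ^ n`-semilinear map to the ring hitting `1`: compose a functional
`I → I / 𝔪 I → k` with the map `k → A` through which the `n`-th iterate of Frobenius factors once
it kills `𝔪`. -/
lemma exists_semilinear_of_isArtinianRing (A : Type u) [CommRing A] [IsLocalRing A]
    [IsArtinianRing A] (p : ℕ) [Fact p.Prime] [CharP A p]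
    (I : Type v) [AddCommGroup I] [Module A I] [Nontrivial I] :
    ∃ (n : ℕ) (φ : I →+ A) (x : I),
      (∀ (a : A) (y : I), φ (a • y) = a ^ p ^ n • φ y) ∧ φ x = 1 := by
  obtain ⟨n, hn⟩ : IsNilpotent (maximalIdeal A) := by
    rw [← IsLocalRing.jacobson_eq_maximalIdeal ⊥ bot_ne_top]
    exact IsArtinianRing.isNilpotent_jacobson_bot
  have htop : maximalIdeal A • (⊤ : Submodule A I) ≠ ⊤ := by
    intro htop
    have : ∀ k, maximalIdeal A ^ k • (⊤ : Submodule A I) = ⊤ := by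
      intro k
      induction k with
      | zero => simp
      | succ k ih => rw [pow_succ, Submodule.mul_smul, htop, ih]
    have := this n
    rw [hn] at this
    simp at this
  have hk : ∀ a ∈ maximalIdeal A, iterateFrobenius A p n a = 0 := by
    intro a ha
    have h0 : a ^ n = 0 := by
      have := Ideal.pow_mem_pow ha n
      rw [hn] at this
      simpa using this
    rw [iterateFrobenius_def]
    exact pow_eq_zero_of_le (Nat.lt_pow_self (Fact.out : p.Prime).one_lt).le h0
  let τ : A ⧸ maximalIdeal A →+* A := Ideal.Quotient.lift _ (iterateFrobenius A p n) hk
  let _ : Field (A ⧸ maximalIdeal A) := Ideal.Quotient.field _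
  have : Nontrivial (I ⧸ maximalIdeal A • (⊤ : Submodule A I)) :=
    Submodule.Quotient.nontrivial_iff.2 htop
  obtain ⟨v, hv⟩ := exists_ne (0 : I ⧸ maximalIdeal A • (⊤ : Submodule A I))
  obtain ⟨f, hf⟩ : ∃ f : Module.Dual (A ⧸ maximalIdeal A)
      (I ⧸ maximalIdeal A • (⊤ : Submodule A I)), f v ≠ 0 := by
    by_contra! hcon
    exact hv ((Module.forall_dual_apply_eq_zero_iff (A ⧸ maximalIdeal A) v).1 hcon)
  obtain ⟨x, rfl⟩ := Submodule.Quotient.mk_surjective _ v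
  let g := (f (Submodule.Quotient.mk x))⁻¹ • f
  refine ⟨n, (τ.toAddMonoidHom.comp g.toAddMonoidHom).comp
    (Submodule.mkQ (maximalIdeal A • (⊤ : Submodule A I))).toAddMonoidHom, x, fun a y => ?_, ?_⟩
  · change τ (g (Submodule.Quotient.mk (a • y))) = a ^ p ^ n • τ (g (Submodule.Quotient.mk y))
    have : (Submodule.Quotient.mk (a • y) : I ⧸ maximalIdeal A • (⊤ : Submodule A I)) =
      Ideal.Quotient.mk (maximalIdeal A) a • Submodule.Quotient.mk y := rfl
    rw [this, map_smul, smul_eq_mul, map_mul, smul_eq_mul]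
    rfl
  · change τ (g (Submodule.Quotient.mk x)) = 1
    have : g (Submodule.Quotient.mk x) = 1 := inv_mul_cancel₀ hf
    rw [this, map_one]

lemma isArtinianRing_localization_of_mem_minimalPrimes (R : Type u) [CommRing R]
    [IsNoetherianRing R] (P : Ideal R) [P.IsPrime] (hP : P ∈ minimalPrimes R) :
    IsArtinianRing (Localization.AtPrime P) := by
  have : IsNoetherianRing (Localization.AtPrime P) :=
    IsLocalization.isNoetherianRing P.primeCompl _ ‹_›
  rw [isArtinianRing_iff_isNoetherianRing_krullDimLE_zero]
  refine ⟨this, Ring.KrullDimLE.mk₀ fun Q hQ => ?_⟩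
  have hle : Q ≤ maximalIdeal _ := IsLocalRing.le_maximalIdeal hQ.ne_top
  suffices Q = maximalIdeal _ by rw [this]; infer_instance
  refine hle.antisymm ?_
  rw [← IsLocalization.under_le_under_iff P.primeCompl (Localization.AtPrime P),
    IsLocalization.AtPrime.under_maximalIdeal (Localization.AtPrime P) P]
  refine hP.2 ⟨hQ.comap _, bot_le⟩ ?_
  have := Ideal.comap_mono (f := algebraMap R (Localization.AtPrime P)) hle
  rwa [show Ideal.comap _ (maximalIdeal _) = _ from
    IsLocalization.AtPrime.under_maximalIdeal (Localization.AtPrime P) P] at this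

lemma injective_localization_of_isFPI (R : Type u) [CommRing R]
    [IsNoetherianRing R] (p : ℕ) [Fact p.Prime] [CharP R p] (h : IsFPI R p)
    (P : Ideal R) [P.IsPrime] (hP : P ∈ minimalPrimes R) :
    Module.Injective (Localization.AtPrime P) (Localization.AtPrime P) := by
  set A := Localization.AtPrime P
  have : IsArtinianRing A := isArtinianRing_localization_of_mem_minimalPrimes R P hP
  have : CharP A p := by
    rw [CharP.charP_iff_prime_eq_zero (Fact.out : p.Prime), ← map_natCast (algebraMap R A),
      CharP.cast_eq_zero, map_zero]
  have : Nontrivial (CharacterModule A) := by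
    obtain ⟨c, hc⟩ := CharacterModule.exists_character_apply_ne_zero_of_ne_zero (one_ne_zero (α := A))
    exact ⟨c, 0, fun h0 => hc (by rw [h0]; rfl)⟩
  have hflat : Module.Flat R A := IsLocalization.flat A P.primeCompl
  -- flatness of `A` over `R` makes its character module injective over `R`, not only over `A`
  have hinj : Module.Injective R (CharacterModule A) := Module.Flat.iff_characterModule_injective.1 hflat
  have : IsScalarTower R A (CharacterModule A) := ⟨fun r a c => by
    ext y
    simp only [CharacterModule.smul_apply]
    congr 1
    simp only [smul_eq_mul, Algebra.smul_def]
    ring⟩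
  obtain ⟨n, φ, x, hφ, hx⟩ := exists_semilinear_of_isArtinianRing A p (CharacterModule A)
  refine injective_self_of_semilinear (p := p) (CharacterModule A) h P.primeCompl n hinj
    (fun s => ?_) φ (fun r j => ?_) x hx
  · rw [← (Algebra.lsmul R R (CharacterModule A) : A →ₐ[R] _).commutes]
    exact (IsLocalization.map_units A s).map _
  · rw [← algebraMap_smul A r j, hφ, ← map_pow, algebraMap_smul]

/-- Let `R` be a commutative Noetherian ring of prime characteristic `p`
which is FPI.  Then `R` is generically Gorenstein:  `R_P` is a Gorenstein local ring for
every minimal prime `P` of `R`. -/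
theorem isGorensteinLocalRing_localization_of_isFPI (R : Type u) [CommRing R]
    [IsNoetherianRing R] (p : ℕ) [Fact p.Prime] [CharP R p] (h : IsFPI R p)
    (P : Ideal R) (hP : P ∈ minimalPrimes R) :
    haveI : P.IsPrime := hP.1.1
    IsGorensteinLocalRing (Localization.AtPrime P) := by
  have : P.IsPrime := hP.1.1
  have hart := isArtinianRing_localization_of_mem_minimalPrimes R P hP
  have hinj := injective_localization_of_isFPI R p h P hP
  refine ⟨inferInstance, inferInstance, [], by simp, .nil _ _, ?_, ?_⟩
  · exact inferInstance
  · have hbot : Ideal.span {x : Localization.AtPrime P | x ∈ ([] : List _)} = ⊥ := by simp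
    rw [hbot]
    exact Module.Injective.of_ringEquiv (RingEquiv.quotientBot (Localization.AtPrime P)).symm
      (RingEquiv.toSemilinearEquiv _)
end

section
/- Let φ : R → S be a homomorphism of Noetherian local rings such that S is finitely generated as an R-module, with E_R and E_S the injective hulls of the residue fields of R and S respectively. Then for any R-module M there is an isomorphism of S-modules Hom_S(S ⊗_R M, E_S) ≅ Hom_R(S, Hom_R(M, E_R)). -/
/-! The isomorphism is tensor-hom adjunction once `E_S` is identified with the coinduced module
`Hom_R(S, E_R)`:
`Hom_S(S ⊗_R M, Hom_R(S, E_R)) ≅ Hom_R(M, Hom_R(S, E_R)) ≅ Hom_R(S, Hom_R(M, E_R))`.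

Injective hulls of the residue field are unique up to isomorphism
(`IsInjectiveHullOfResidueField.nonempty_linearEquiv`), so the identification amounts to showing
that `Hom_R(S, E_R)` is an injective hull of the residue field `k_S` of `S`.
* Injectivity: by Baer's criterion, an `S`-linear map `I → Hom_R(S, E_R)` is the same as an
  `R`-linear map `I → E_R` (evaluate at `1`), which extends to `S`.
* Socle: a homomorphism `S → E_R` killed by `m_S` factors through `k_S` and takes values in the
  copy of `k_R` in `E_R`. Since `k_S` is finite over `k_R`, the space `Hom_{k_R}(k_S, k_R)` has
  dimension one over `k_S`, generated by any nonzero functional, so the socle is a copy of `k_S`.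
* Essentiality: every element of `E_R` is killed by a power of each `a ∈ m_R`, hence, `S` being
  finite over `R`, so is every `f : S → E_R`. An associated prime of a nonzero submodule of
  `Hom_R(S, E_R)` thus lies over `m_R`, so it is `m_S` by integrality, and the submodule meets
  the socle. -/

open TensorProduct IsLocalRing

universe u v

/-- `E` is an injective hull of the residue field of the local ring `A`:  it is an injective
module containing a copy of the residue field as an essential submodule
(every nonzero submodule meets it nontrivially). -/
def IsInjectiveHullOfResidueField (A : Type u) [CommRing A] [IsLocalRing A]
    (E : Type v) [AddCommGroup E] [Module A E] : Prop :=
  Module.Injective A E ∧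
    ∃ φ : ResidueField A →ₗ[A] E, Function.Injective φ ∧
      ∀ N : Submodule A E, N ≠ ⊥ → N ⊓ LinearMap.range φ ≠ ⊥


/-! ### Uniqueness of the injective hull -/

/-- An injective module containing `k` essentially is determined up to isomorphism. -/
theorem IsInjectiveHullOfResidueField.nonempty_linearEquiv {A : Type u} [CommRing A]
    [IsLocalRing A] {E H : Type u} [AddCommGroup E] [Module A E] [AddCommGroup H] [Module A H]
    (hE : IsInjectiveHullOfResidueField A E) (hH : IsInjectiveHullOfResidueField A H) :
    Nonempty (E ≃ₗ[A] H) := by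
  obtain ⟨iE, φ, hφ, eφ⟩ := hE
  obtain ⟨iH, ι, hι, eι⟩ := hH
  -- An extension of `ι` along `φ` is injective because `φ` is essential.
  obtain ⟨θ, hθ⟩ := iH.out φ hφ ι
  have θinj : Function.Injective θ := by
    rw [← LinearMap.ker_eq_bot]
    by_contra h
    refine eφ _ h ((Submodule.eq_bot_iff _).2 ?_)
    rintro _ ⟨hx, y, rfl⟩
    have : ι y = 0 := by rw [← hθ]; exact hx
    rw [(map_eq_zero_iff ι hι).1 this, map_zero]
  -- A retraction of `θ` is injective because `ι` is essential, so it is an isomorphism.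
  obtain ⟨ρ, hρ⟩ := iE.out θ θinj LinearMap.id
  have ρinj : Function.Injective ρ := by
    rw [← LinearMap.ker_eq_bot]
    by_contra h
    refine eι _ h ((Submodule.eq_bot_iff _).2 ?_)
    rintro _ ⟨hx, y, rfl⟩
    have : φ y = 0 := by
      have h1 := hρ (φ y)
      rw [hθ] at h1
      exact h1.symm.trans hx
    rw [(map_eq_zero_iff φ hφ).1 this, map_zero]
  exact ⟨(LinearEquiv.ofBijective ρ ⟨ρinj, fun x => ⟨θ x, hρ x⟩⟩).symm⟩

/-! ### The socle of `E_R` and torsion -/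

section Essential

variable {R : Type u} [CommRing R] [IsLocalRing R] {E : Type u} [AddCommGroup E] [Module R E]
  {φ : ResidueField R →ₗ[R] E}

theorem exists_smul_mem_range_of_essential
    (hφ : ∀ N : Submodule R E, N ≠ ⊥ → N ⊓ LinearMap.range φ ≠ ⊥)
    {x : E} (hx : x ≠ 0) :
    ∃ r : R, r • x ≠ 0 ∧ r • x ∈ LinearMap.range φ := by
  have h := hφ (R ∙ x) (by simpa using hx)
  obtain ⟨y, ⟨hy, hy'⟩, hy0⟩ := Submodule.exists_mem_ne_zero_of_ne_bot h
  obtain ⟨r, rfl⟩ := Submodule.mem_span_singleton.1 hy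
  exact ⟨r, hy0, hy'⟩

theorem smul_eq_zero_of_mem_range {a : R} (ha : a ∈ maximalIdeal R) {x : E}
    (hx : x ∈ LinearMap.range φ) : a • x = 0 := by
  obtain ⟨y, rfl⟩ := hx
  rw [← map_smul, Algebra.smul_def, ResidueField.algebraMap_eq, (residue_eq_zero_iff a).2 ha,
    zero_mul, map_zero]

/-- The copy of the residue field is the whole socle. -/
theorem mem_range_of_forall_smul_eq_zero
    (hφ : ∀ N : Submodule R E, N ≠ ⊥ → N ⊓ LinearMap.range φ ≠ ⊥)
    {x : E} (hx : ∀ a ∈ maximalIdeal R, a • x = 0) :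
    x ∈ LinearMap.range φ := by
  by_cases h0 : x = 0
  · simp [h0]
  obtain ⟨r, hr0, hr⟩ := exists_smul_mem_range_of_essential hφ h0
  have hu : IsUnit r := by
    by_contra h
    exact hr0 (hx r ((mem_maximalIdeal r).2 h))
  obtain ⟨u, rfl⟩ := hu
  simpa [smul_smul] using (LinearMap.range φ).smul_mem (↑u⁻¹ : R) hr

/-- The annihilators of `aⁿ x` stabilise. If `aⁿ x ≠ 0` at that point, then some multiple
`r aⁿ x` is a nonzero socle element, and `r` kills `aⁿ⁺¹ x` but not `aⁿ x`. -/
theorem exists_pow_smul_eq_zero [IsNoetherianRing R]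
    (hφ : ∀ N : Submodule R E, N ≠ ⊥ → N ⊓ LinearMap.range φ ≠ ⊥)
    {a : R} (ha : a ∈ maximalIdeal R) (x : E) :
    ∃ n : ℕ, a ^ n • x = 0 := by
  let F : ℕ →o Ideal R :=
    { toFun := fun n => LinearMap.ker (LinearMap.toSpanSingleton R E (a ^ n • x))
      monotone' := by
        refine monotone_nat_of_le_succ fun n r hr => ?_
        simp only [LinearMap.mem_ker, LinearMap.toSpanSingleton_apply] at hr ⊢
        rw [pow_succ', mul_smul, smul_comm, hr, smul_zero] }
  obtain ⟨n, hn⟩ := monotone_stabilizes_iff_noetherian.2 ‹IsNoetherianRing R› F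
  refine ⟨n, by_contra fun h0 => ?_⟩
  obtain ⟨r, hr0, hr⟩ := exists_smul_mem_range_of_essential hφ h0
  have h1 : r ∈ F (n + 1) := by
    change r • a ^ (n + 1) • x = 0
    rw [pow_succ', mul_smul, smul_comm]
    exact smul_eq_zero_of_mem_range ha hr
  rw [← hn (n + 1) n.le_succ] at h1
  exact hr0 h1

end Essential

/-! ### The coinduced module -/

/-- The coinduced module `Hom_R(S, E)`, as a type synonym so that it can carry the `S`-module
structure `(s • f) x = f (s * x)`. -/
def Coind (R S E : Type u) [CommRing R] [CommRing S] [Algebra R S] [AddCommGroup E]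
    [Module R E] : Type u := S →ₗ[R] E

namespace Coind

section Basic

variable {R S E : Type u} [CommRing R] [CommRing S] [Algebra R S] [AddCommGroup E] [Module R E]

noncomputable instance : AddCommGroup (Coind R S E) :=
  inferInstanceAs (AddCommGroup (S →ₗ[R] E))

noncomputable instance : Module R (Coind R S E) :=
  inferInstanceAs (Module R (S →ₗ[R] E))

/-- The defining identification of `Coind R S E` with `Hom_R(S, E)`. -/
noncomputable def toHom : Coind R S E ≃ₗ[R] (S →ₗ[R] E) := LinearEquiv.refl R (S →ₗ[R] E)

@[ext] theorem ext {f g : Coind R S E} (h : ∀ x, toHom f x = toHom g x) : f = g :=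
  toHom.injective (LinearMap.ext h)

noncomputable instance : SMul S (Coind R S E) :=
  ⟨fun s f => toHom.symm (toHom f ∘ₗ LinearMap.mul R S s)⟩

@[simp] theorem toHom_smul (s : S) (f : Coind R S E) (x : S) :
    toHom (s • f) x = toHom f (s * x) := rfl

noncomputable instance : Module S (Coind R S E) where
  one_smul f := by ext x; simp
  mul_smul s t f := by ext x; simp [mul_left_comm, mul_assoc]
  smul_zero s := by ext x; simp
  smul_add s f g := by ext x; simp
  add_smul s t f := by ext x; simp [add_mul]
  zero_smul f := by ext x; simp

instance : IsScalarTower R S (Coind R S E) where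
  smul_assoc r s f := by ext x; simp

theorem injective (hE : Module.Injective R E) : Module.Injective S (Coind R S E) := by
  refine Module.Baer.injective fun I g => ?_
  let g₁ : I →ₗ[R] E :=
    { toFun := fun x => toHom (g x) 1
      map_add' := by intros; simp
      map_smul' := by
        intro r x
        rw [← algebraMap_smul S r x, map_smul, algebraMap_smul]
        simp }
  obtain ⟨h, hh⟩ := hE.out (I.subtype.restrictScalars R) Subtype.val_injective g₁
  refine ⟨
    { toFun := fun s => toHom.symm (h ∘ₗ LinearMap.mul R S s)
      map_add' := by intros; ext x; simp
      map_smul' := by intros; ext x; simp [mul_assoc, mul_left_comm] }, fun x hx => ?_⟩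
  ext y
  have h1 : h (y * x) = toHom (g (y • ⟨x, hx⟩)) 1 := hh (y • ⟨x, hx⟩)
  rw [map_smul, toHom_smul, mul_one, mul_comm] at h1
  exact h1

end Basic

section Hull

variable {R S E : Type u} [CommRing R] [IsLocalRing R] [CommRing S] [Algebra R S]
  [AddCommGroup E] [Module R E]

theorem exists_pow_smul_eq_zero [IsNoetherianRing R] [Module.Finite R S]
    {φ : ResidueField R →ₗ[R] E}
    (hφ : ∀ N : Submodule R E, N ≠ ⊥ → N ⊓ LinearMap.range φ ≠ ⊥)
    {a : R} (ha : a ∈ maximalIdeal R) (f : Coind R S E) : ∃ n : ℕ, a ^ n • f = 0 := by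
  obtain ⟨t, ht⟩ := Module.finite_def.1 (inferInstance : Module.Finite R S)
  choose n hn using fun x : S => _root_.exists_pow_smul_eq_zero hφ ha (toHom f x)
  refine ⟨t.sup n, ?_⟩
  apply toHom.injective
  rw [map_zero]
  refine LinearMap.ext_on ht fun x hx => ?_
  obtain ⟨k, hk⟩ := Nat.exists_eq_add_of_le (Finset.le_sup (f := n) hx)
  rw [hk, add_comm, pow_add]
  simp [mul_smul, hn]

/-- Every nonzero submodule of `Hom_R(S, E)` contains a nonzero element killed by `m_S`. -/
theorem exists_socle_element [IsNoetherianRing R] [IsNoetherianRing S] [IsLocalRing S]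
    [Module.Finite R S] {φ : ResidueField R →ₗ[R] E}
    (hφ : ∀ N : Submodule R E, N ≠ ⊥ → N ⊓ LinearMap.range φ ≠ ⊥)
    {N : Submodule S (Coind R S E)} (hN : N ≠ ⊥) :
    ∃ f ∈ N, f ≠ 0 ∧ ∀ b ∈ maximalIdeal S, b • f = 0 := by
  obtain ⟨x, hx, hx0⟩ := Submodule.exists_mem_ne_zero_of_ne_bot hN
  obtain ⟨P, hP, -⟩ := exists_le_isAssociatedPrime_of_isNoetherianRing S (⟨x, hx⟩ : N)
    (by simpa using hx0)
  rw [isAssociatedPrime_iff] at hP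
  obtain ⟨hPp, f, hf⟩ := hP
  have memP (b : S) : b ∈ P ↔ b • (f : Coind R S E) = 0 := by
    rw [hf, Submodule.mem_colon_singleton, Submodule.mem_bot, ← Subtype.coe_inj]
    rfl
  have hle : maximalIdeal R ≤ P.comap (algebraMap R S) := by
    intro a ha
    obtain ⟨n, hn⟩ := exists_pow_smul_eq_zero hφ ha (f : Coind R S E)
    refine hPp.mem_of_pow_mem n ((memP _).2 ?_)
    rw [← map_pow, algebraMap_smul, hn]
  have hmax : (P.comap (algebraMap R S)).IsMaximal := by
    rw [← (maximalIdeal.isMaximal R).eq_of_le (Ideal.comap_ne_top _ hPp.ne_top) hle]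
    infer_instance
  have hPm : P = maximalIdeal S :=
    eq_maximalIdeal (Ideal.isMaximal_of_isIntegral_of_isMaximal_comap P hmax)
  refine ⟨f, f.2, fun h => ?_, fun b hb => (memP b).1 (hPm ▸ hb)⟩
  exact hPp.ne_top ((Ideal.eq_top_iff_one _).2 ((memP 1).2 (by rw [h, smul_zero])))

/-- `Hom_{k_R}(k_S, k_R)` is generated over `k_S` by a single functional: for `l ≠ 0` the map
`c ↦ l(c ·)` is injective between `k_R`-spaces of equal finite dimension. -/
theorem exists_generating_functional [IsLocalRing S] [IsLocalHom (algebraMap R S)]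
    [Module.Finite R S] :
    ∃ l : ResidueField S →ₗ[ResidueField R] ResidueField R,
      Function.Bijective ((LinearMap.mul (ResidueField R) (ResidueField S)).compr₂ l) := by
  obtain ⟨l, hl⟩ : ∃ l : Module.Dual (ResidueField R) (ResidueField S), l 1 ≠ 0 := by
    by_contra! h
    exact one_ne_zero ((Module.forall_dual_apply_eq_zero_iff (ResidueField R) _).1 h)
  have hinj : Function.Injective
      ((LinearMap.mul (ResidueField R) (ResidueField S)).compr₂ l) := by
    rw [injective_iff_map_eq_zero]
    intro c hc
    by_contra h0
    have := LinearMap.congr_fun hc c⁻¹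
    simp [h0, hl] at this
  exact ⟨l, hinj, (LinearMap.injective_iff_surjective_of_finrank_eq_finrank
    Subspace.dual_finrank_eq.symm).1 hinj⟩

/-- A map `S → E_R` killed by `m_S` factors as `S → k_S → k_R → E_R`. -/
theorem exists_factorization [IsLocalRing S] [IsLocalHom (algebraMap R S)]
    {φ : ResidueField R →ₗ[R] E} (hφi : Function.Injective φ)
    (hφ : ∀ N : Submodule R E, N ≠ ⊥ → N ⊓ LinearMap.range φ ≠ ⊥)
    {f : Coind R S E} (hf : ∀ b ∈ maximalIdeal S, b • f = 0) :
    ∃ g : ResidueField S →ₗ[ResidueField R] ResidueField R,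
      ∀ x, toHom f x = φ (g (residue S x)) := by
  have hker : ∀ b ∈ maximalIdeal S, toHom f b = 0 := fun b hb => by
    have := congrArg (fun h => toHom h 1) (hf b hb)
    simpa using this
  have hrange : ∀ x, toHom f x ∈ LinearMap.range φ := fun x =>
    mem_range_of_forall_smul_eq_zero hφ fun a ha => by
      rw [← map_smul, Algebra.smul_def]
      exact hker _ (Ideal.mul_mem_right _ _ (((IsLocalRing.local_hom_TFAE
        (algebraMap R S)).out 0 2 rfl rfl).1 inferInstance (Ideal.mem_map_of_mem _ ha)))
  choose p hp using hrange
  have hres (x y : S) (h : residue S x = residue S y) : p x = p y := by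
    apply hφi
    rw [hp, hp, ← sub_eq_zero, ← map_sub]
    refine hker _ ((residue_eq_zero_iff _).1 ?_)
    rw [map_sub, h, sub_self]
  let q : ResidueField S → ResidueField R := fun c => p (Function.surjInv residue_surjective c)
  have hq (x : S) : q (residue S x) = p x := hres _ _ (Function.surjInv_eq residue_surjective _)
  refine ⟨{ toFun := q, map_add' := ?_, map_smul' := ?_ }, fun x => ?_⟩
  · intro c d
    obtain ⟨x, rfl⟩ := residue_surjective c
    obtain ⟨y, rfl⟩ := residue_surjective d
    apply hφi
    rw [← map_add, map_add φ, hq, hq, hq, hp, hp, hp, map_add]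
  · intro r d
    obtain ⟨a, rfl⟩ := residue_surjective r
    obtain ⟨y, rfl⟩ := residue_surjective d
    apply hφi
    have h1 : residue R a • residue S y = residue S (a • y) := by
      rw [Algebra.smul_def, Algebra.smul_def, map_mul]
      rfl
    have h2 : residue R a • p y = a • p y := by
      rw [Algebra.smul_def a]
      rfl
    rw [RingHom.id_apply, h1, hq, hq, h2, map_smul, hp, hp, map_smul]
  · exact ((congrArg φ (hq x)).trans (hp x)).symm

/-- `Hom_R(S, E_R)` is an injective hull of the residue field of `S`. -/
theorem isInjectiveHull [IsNoetherianRing R] [IsNoetherianRing S] [IsLocalRing S]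
    [IsLocalHom (algebraMap R S)] [Module.Finite R S] (hE : IsInjectiveHullOfResidueField R E) :
    IsInjectiveHullOfResidueField S (Coind R S E) := by
  obtain ⟨iE, φ, hφi, hφ⟩ := hE
  obtain ⟨l, hl⟩ := exists_generating_functional (R := R) (S := S)
  let ι : ResidueField S →ₗ[S] Coind R S E :=
    { toFun := fun c => toHom.symm
        { toFun := fun x => φ (l (c * residue S x))
          map_add' := by intros; simp [mul_add]
          map_smul' := by
            intro a x
            have h1 : c * residue S (a • x) = residue R a • (c * residue S x) := by
              rw [Algebra.smul_def, Algebra.smul_def, map_mul, mul_left_comm]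
              rfl
            have h2 : residue R a • l (c * residue S x) = a • l (c * residue S x) := by
              rw [Algebra.smul_def a]
              rfl
            rw [h1, map_smul, h2, map_smul, RingHom.id_apply] }
      map_add' := by intros; ext x; simp [add_mul]
      map_smul' := by
        intro s c
        ext x
        have h : s • c * residue S x = c * residue S (s * x) := by
          rw [Algebra.smul_def, map_mul, ResidueField.algebraMap_eq]
          ring
        exact congrArg (fun d => φ (l d)) h }
  have hι (c : ResidueField S) (x : S) : toHom (ι c) x = φ (l (c * residue S x)) := rfl
  refine ⟨injective iE, ι, ?_, fun N hN h => ?_⟩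
  · intro c d hcd
    apply hl.1
    ext y
    obtain ⟨x, rfl⟩ := residue_surjective y
    apply hφi
    have := congrArg (fun f => toHom f x) hcd
    simpa [hι] using this
  · obtain ⟨f, hfN, hf0, hf⟩ := exists_socle_element hφ hN
    obtain ⟨g, hg⟩ := exists_factorization hφi hφ hf
    obtain ⟨c, hc⟩ := hl.2 g
    have hfι : ι c = f := by
      ext x
      rw [hι, hg, ← hc]
      rfl
    exact hf0 ((Submodule.eq_bot_iff _).1 h f ⟨hfN, c, hfι⟩)

end Hull

end Coind

/-- Let `φ : R → S` be a local homomorphism of Noetherian local rings such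
that `S` is finitely generated as an `R`-module, with `E_R`, `E_S` injective hulls of the
residue fields of `R` and `S`.  Then for any `R`-module `M` there is an isomorphism of
`S`-modules `Hom_S(S ⊗_R M, E_S) ≅ Hom_R(S, Hom_R(M, E_R))`, where `S` acts on the
right-hand side by `(s • ψ)(x) = ψ (s * x)`. -/
theorem hom_baseChange_equiv (R : Type u) [CommRing R] [IsNoetherianRing R] [IsLocalRing R]
    (S : Type u) [CommRing S] [IsNoetherianRing S] [IsLocalRing S]
    [Algebra R S] [IsLocalHom (algebraMap R S)] [Module.Finite R S]
    (ER : Type u) [AddCommGroup ER] [Module R ER] (hER : IsInjectiveHullOfResidueField R ER)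
    (ES : Type u) [AddCommGroup ES] [Module S ES] (hES : IsInjectiveHullOfResidueField S ES)
    (M : Type u) [AddCommGroup M] [Module R M] :
    ∃ e : ((S ⊗[R] M) →ₗ[S] ES) ≃+ (S →ₗ[R] (M →ₗ[R] ER)),
      ∀ (s : S) (ψ : (S ⊗[R] M) →ₗ[S] ES), e (s • ψ) = (e ψ) ∘ₗ LinearMap.mul R S s := by
  obtain ⟨θ⟩ := hES.nonempty_linearEquiv (Coind.isInjectiveHull (S := S) hER)
  let e₁ : ((S ⊗[R] M) →ₗ[S] ES) ≃+ ((S ⊗[R] M) →ₗ[S] Coind R S ER) :=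
    (θ.congrRight).toAddEquiv
  let e₂ : ((S ⊗[R] M) →ₗ[S] Coind R S ER) ≃+ (M →ₗ[R] Coind R S ER) :=
    (LinearMap.liftBaseChangeEquiv S).symm.toAddEquiv
  let e₃ : (M →ₗ[R] Coind R S ER) ≃+ (M →ₗ[R] S →ₗ[R] ER) :=
    (Coind.toHom.congrRight).toAddEquiv
  let e₄ : (M →ₗ[R] S →ₗ[R] ER) ≃+ (S →ₗ[R] M →ₗ[R] ER) :=
    (LinearMap.lflip (R₀ := R)).toAddEquiv
  refine ⟨((e₁.trans e₂).trans e₃).trans e₄, fun s ψ => ?_⟩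
  ext x m
  change Coind.toHom (θ (s • ψ (1 ⊗ₜ[R] m))) x = Coind.toHom (θ (ψ (1 ⊗ₜ[R] m))) (s * x)
  rw [map_smul, Coind.toHom_smul]
end

section
/- Let (R,m) be a Noetherian local ring of prime characteristic p and I an ideal generated by a regular sequence. Then R/I ⊗_R E_{R/I^{[p]}}(R/m) ≅ E_{R/I}(R/m), where I^{[p]} is the ideal generated by the p-th powers of elements of I. -/
/-!
Write `I = (x₁, …, xₙ)`, `q = I^[p] = (x₁ᵖ, …, xₙᵖ)` and `u = (x₁ ⋯ xₙ)^(p-1)`. Over a Noetherian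
local ring a regular sequence may be permuted, and its members may be replaced by powers, so one
can treat one `xᵢ` at a time and obtain the two colon formulas `(q : u) = I` (`mem_of_mul_mem`) and
`(q : I) = q + (u)` (`mem_of_forall_mul_mem`).

Let `E` be the injective hull of the residue field over `R/q`. Extending maps defined on submodules
of free `R/q`-modules to `E`, the formulas become `uE = E[I]` and `E[u] = IE`, where `E[-]` denotes
the elements killed by the given element or ideal. Hence multiplication by `u` induces
`R/I ⊗ E = E/IE ≃ uE = E[I]`. The module `E[I]` is injective over `R/I` and still contains the
residue field as an essential submodule, so it is the injective hull over `R/I`, which is unique up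
to isomorphism.

Everything is phrased with `R`-modules: `InjectiveModulo K X` replaces injectivity over `R/K`, and
a copy of the residue field is given by a generator of it (`IsEssentialSocle`).
-/

open TensorProduct IsLocalRing

universe u v

/-! ### Regular sequences modulo an ideal and colon ideals -/

section Colon

variable {R : Type u} [CommRing R]

/-- `l` is a weakly regular sequence on `R ⧸ L`. -/
def RegularModulo (L : Ideal R) : List R → Prop
  | [] => True
  | x :: l => (∀ r, x * r ∈ L → r ∈ L) ∧ RegularModulo (L ⊔ Ideal.span {x}) l

/-- `l` is a weakly regular sequence on `R ⧸ L` in any order. -/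
def PermRegularModulo (L : Ideal R) (l : List R) : Prop :=
  ∀ l' : List R, l'.Perm l → RegularModulo L l'

lemma mem_sup_span_singleton_iff {K : Ideal R} {a r : R} :
    r ∈ K ⊔ Ideal.span {a} ↔ ∃ s, r - s * a ∈ K := by
  rw [Submodule.mem_sup]
  constructor
  · rintro ⟨y, hy, z, hz, rfl⟩
    obtain ⟨s, rfl⟩ := Ideal.mem_span_singleton'.1 hz
    exact ⟨s, by simpa using hy⟩
  · rintro ⟨s, hs⟩
    exact ⟨_, hs, s * a, Ideal.mem_span_singleton'.2 ⟨s, rfl⟩, by ring⟩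

lemma regularModulo_of_forall (rs : List R) : ∀ L : Ideal R,
    (∀ i (h : i < rs.length), ∀ r, rs[i] * r ∈ L ⊔ Ideal.ofList (rs.take i) →
      r ∈ L ⊔ Ideal.ofList (rs.take i)) → RegularModulo L rs := by
  induction rs with
  | nil => intro L _; trivial
  | cons x l ih =>
    intro L h
    refine ⟨fun r hr => ?_, ih _ fun i hi r hr => ?_⟩
    · have := h 0 (by simp) r
      simp only [List.getElem_cons_zero, List.take_zero, Ideal.ofList_nil, sup_bot_eq] at this
      exact this hr
    · have := h (i + 1) (by simpa using hi) r
      simp only [List.getElem_cons_succ, List.take_succ_cons, Ideal.ofList_cons,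
        ← sup_assoc] at this
      exact this hr

lemma regularModulo_bot {rs : List R} (h : RingTheory.Sequence.IsWeaklyRegular R rs) :
    RegularModulo ⊥ rs := by
  refine regularModulo_of_forall rs ⊥ fun i hi r hr => ?_
  rw [bot_sup_eq] at hr ⊢
  have h1 := h.regular_mod_prev i hi
  rw [isSMulRegular_quotient_iff_mem_of_smul_mem] at h1
  simpa using h1 r (by simpa using hr)

lemma PermRegularModulo.perm {L : Ideal R} {l l' : List R} (h : PermRegularModulo L l)
    (hl : l'.Perm l) : PermRegularModulo L l' := fun m hm => h m (hm.trans hl)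

lemma PermRegularModulo.tail {L : Ideal R} {x : R} {l : List R}
    (h : PermRegularModulo L (x :: l)) : PermRegularModulo (L ⊔ Ideal.span {x}) l :=
  fun l' hl' => (h (x :: l') (hl'.cons x)).2

/-- If `y` is a nonzerodivisor modulo `L` and `x` is one modulo `L + (y)`, then `x` is one modulo
`L + (yᵏ)`. -/
lemma regular_mod_pow {L : Ideal R} {x y : R} (hy : ∀ r, y * r ∈ L → r ∈ L)
    (hx : ∀ r, x * r ∈ L ⊔ Ideal.span {y} → r ∈ L ⊔ Ideal.span {y}) (k : ℕ) :
    ∀ r, x * r ∈ L ⊔ Ideal.span {y ^ k} → r ∈ L ⊔ Ideal.span {y ^ k} := by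
  have hyk : ∀ k r, y ^ k * r ∈ L → r ∈ L := by
    intro k
    induction k with
    | zero => simp
    | succ k ih => exact fun r hr => ih r (hy _ (by convert hr using 1; ring))
  induction k with
  | zero => intro r _; simp
  | succ k ih =>
    intro r hr
    obtain ⟨t, ht⟩ := mem_sup_span_singleton_iff.1 hr
    obtain ⟨s, hs⟩ := mem_sup_span_singleton_iff.1
      (ih r (mem_sup_span_singleton_iff.2 ⟨t * y, by convert ht using 1; ring⟩))
    have h1 : x * s - t * y ∈ L := by
      apply hyk k
      have : y ^ k * (x * s - t * y) = (x * r - t * y ^ (k + 1)) - x * (r - s * y ^ k) := by ring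
      rw [this]
      exact L.sub_mem ht (L.mul_mem_left _ hs)
    obtain ⟨w, hw⟩ := mem_sup_span_singleton_iff.1
      (hx s (mem_sup_span_singleton_iff.2 ⟨t, h1⟩))
    refine mem_sup_span_singleton_iff.2 ⟨w, ?_⟩
    have : r - w * y ^ (k + 1) = (r - s * y ^ k) + y ^ k * (s - w * y) := by ring
    rw [this]
    exact L.add_mem hs (L.mul_mem_left _ hw)

lemma PermRegularModulo.regularModulo_pow (k : ℕ) (y : R) (c : List R) : ∀ L : Ideal R,
    PermRegularModulo L (y :: c) → RegularModulo (L ⊔ Ideal.span {y ^ k}) c := by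
  induction c with
  | nil => intro L _; trivial
  | cons z c ih =>
    intro L h
    have h1 := h _ (List.Perm.refl _)
    refine ⟨regular_mod_pow h1.1 h1.2.1 k, ?_⟩
    rw [sup_right_comm]
    exact ih _ (h.perm (List.Perm.swap y z c)).tail

lemma PermRegularModulo.pow {L : Ideal R} {y : R} {c : List R}
    (h : PermRegularModulo L (y :: c)) (k : ℕ) :
    PermRegularModulo (L ⊔ Ideal.span {y ^ k}) c :=
  fun c' hc' => PermRegularModulo.regularModulo_pow k y c' L (h.perm (hc'.cons y))

lemma PermRegularModulo.regular_mod_pows (k : ℕ) (x : R) (b : List R) : ∀ L : Ideal R,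
    PermRegularModulo L (x :: b) →
    ∀ r, x * r ∈ L ⊔ Ideal.ofList (b.map (· ^ k)) → r ∈ L ⊔ Ideal.ofList (b.map (· ^ k)) := by
  induction b with
  | nil => intro L h r; simpa using (h _ (List.Perm.refl _)).1 r
  | cons y b ih =>
    intro L h
    rw [List.map_cons, Ideal.ofList_cons, ← sup_assoc]
    exact ih _ ((h.perm (List.Perm.swap x y b)).pow k)

lemma mem_sup_of_mul_pow_mem {K : Ideal R} {x : R} (hx : ∀ r, x * r ∈ K → r ∈ K) (n : ℕ) :
    ∀ r, r * x ^ n ∈ K ⊔ Ideal.span {x ^ (n + 1)} → r ∈ K ⊔ Ideal.span {x} := by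
  intro r hr
  obtain ⟨s, hs⟩ := mem_sup_span_singleton_iff.1 hr
  refine mem_sup_span_singleton_iff.2 ⟨s, ?_⟩
  have key : ∀ n r, x ^ n * r ∈ K → r ∈ K := by
    intro n
    induction n with
    | zero => simp
    | succ n ih => exact fun r hr => ih r (hx _ (by convert hr using 1; ring))
  apply key n
  convert hs using 1; ring

/-- The colon formula `(q : u) = I` modulo `L`. -/
lemma mem_of_mul_mem (n : ℕ) (l : List R) : ∀ L : Ideal R, PermRegularModulo L l →
    ∀ r, r * (l.map (· ^ n)).prod ∈ L ⊔ Ideal.ofList (l.map (· ^ (n + 1))) →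
      r ∈ L ⊔ Ideal.ofList l := by
  induction l with
  | nil => intro L _ r; simp
  | cons x l ih =>
    intro L h r hr
    rw [Ideal.ofList_cons, ← sup_assoc]
    apply ih _ h.tail
    rw [sup_right_comm]
    apply mem_sup_of_mul_pow_mem (h.regular_mod_pows (n + 1) x l L) n
    rw [List.map_cons, List.map_cons, Ideal.ofList_cons, List.prod_cons, ← sup_assoc,
      sup_right_comm] at hr
    convert hr using 1; ring

/-- The colon formula `(q : I) = q + (u)` modulo `L`. -/
lemma mem_of_forall_mul_mem (n : ℕ) (l : List R) : ∀ L : Ideal R, PermRegularModulo L l →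
    ∀ r, (∀ x ∈ l, r * x ∈ L ⊔ Ideal.ofList (l.map (· ^ (n + 1)))) →
      r ∈ (L ⊔ Ideal.ofList (l.map (· ^ (n + 1)))) ⊔ Ideal.span {(l.map (· ^ n)).prod} := by
  induction l with
  | nil => intro L _ r; simp
  | cons x l ih =>
    intro L h r hr
    set K := L ⊔ Ideal.ofList (l.map (· ^ (n + 1))) with hK
    have hsup : L ⊔ Ideal.ofList ((x :: l).map (· ^ (n + 1))) = K ⊔ Ideal.span {x ^ (n + 1)} := by
      rw [List.map_cons, Ideal.ofList_cons, hK, sup_right_comm, sup_assoc]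
    have hx := h.regular_mod_pows (n + 1) x l L
    rw [← hK] at hx
    rw [hsup] at hr ⊢
    obtain ⟨s, hs⟩ := mem_sup_span_singleton_iff.1 (hr x (by simp))
    have h1 : r - s * x ^ n ∈ K := hx _ (by convert hs using 1; ring)
    have h2 : s ∈ (L ⊔ Ideal.span {x} ⊔ Ideal.ofList (l.map (· ^ (n + 1)))) ⊔
        Ideal.span {(l.map (· ^ n)).prod} := by
      refine ih _ h.tail s fun y hy => ?_
      rw [sup_right_comm]
      apply mem_sup_of_mul_pow_mem hx n
      have : s * y * x ^ n = r * y - y * (r - s * x ^ n) := by ring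
      rw [this]
      exact Ideal.sub_mem _ (hr y (by simp [hy]))
        (Ideal.mul_mem_left _ _ (Ideal.mem_sup_left h1))
    rw [sup_right_comm L, ← hK] at h2
    obtain ⟨b, hb⟩ := mem_sup_span_singleton_iff.1 h2
    obtain ⟨a, ha⟩ := mem_sup_span_singleton_iff.1 hb
    refine mem_sup_span_singleton_iff.2 ⟨b, mem_sup_span_singleton_iff.2 ⟨a, ?_⟩⟩
    rw [List.map_cons, List.prod_cons]
    have : r - b * (x ^ n * (l.map (· ^ n)).prod) - a * x ^ (n + 1) =
        (r - s * x ^ n) + x ^ n * (s - b * (l.map (· ^ n)).prod - a * x) := by ring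
    rw [this]
    exact K.add_mem h1 (K.mul_mem_left _ ha)

lemma mul_prod_pow_mem (n : ℕ) {l : List R} {x : R} (hx : x ∈ l) :
    x * (l.map (· ^ n)).prod ∈ Ideal.ofList (l.map (· ^ (n + 1))) := by
  obtain ⟨t, ht⟩ := List.dvd_prod (List.mem_map_of_mem (f := (· ^ n)) hx)
  rw [ht, ← mul_assoc, ← pow_succ']
  exact Ideal.mul_mem_right _ _
    (Ideal.subset_span (List.mem_map_of_mem (f := (· ^ (n + 1))) hx))

end Colon

/-! ### Modules injective modulo an ideal -/

section Hull

variable {R : Type u} [CommRing R]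

/-- Extension property of `X` along injections into `R`-modules killed by `K`; when `X` is itself
killed by `K`, this is injectivity of `X` over `R ⧸ K`. -/
def InjectiveModulo (K : Ideal R) (X : Type u) [AddCommGroup X] [Module R X] : Prop :=
  ∀ (N M : Type u) [AddCommGroup N] [AddCommGroup M] [Module R N] [Module R M]
    (f : N →ₗ[R] M), Function.Injective f → (∀ a ∈ K, ∀ m : M, a • m = 0) →
    ∀ g : N →ₗ[R] X, ∃ h : M →ₗ[R] X, ∀ n, h (f n) = g n

/-- `s` generates an essential submodule of `X` isomorphic to `R ⧸ m`. -/
def IsEssentialSocle [IsLocalRing R] {X : Type u} [AddCommGroup X] [Module R X] (s : X) : Prop :=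
  (∀ r : R, r • s = 0 ↔ r ∈ maximalIdeal R) ∧ ∀ e : X, e ≠ 0 → ∃ r : R, r • e = s

lemma InjectiveModulo.of_injective (K : Ideal R) (X : Type u) [AddCommGroup X] [Module R X]
    [Module (R ⧸ K) X] [IsScalarTower R (R ⧸ K) X] (h : Module.Injective (R ⧸ K) X) :
    InjectiveModulo K X := by
  intro N M _ _ _ _ f hf hM g
  have hM' : Module.IsTorsionBySet R M K := fun m a => hM a.1 a.2 m
  have hN' : Module.IsTorsionBySet R N K := fun m a => hf (by
    rw [map_smul, map_zero]; exact hM a.1 a.2 _)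
  let := hM'.module
  let := hN'.module
  have : IsScalarTower R (R ⧸ K) M := hM'.isScalarTower
  have : IsScalarTower R (R ⧸ K) N := hN'.isScalarTower
  have hs : Function.Surjective (algebraMap R (R ⧸ K)) := Ideal.Quotient.mk_surjective
  obtain ⟨k, hk⟩ := h.out (f.extendScalarsOfSurjective hs) hf (g.extendScalarsOfSurjective hs)
  exact ⟨k.restrictScalars R, hk⟩

lemma IsInjectiveHullOfResidueField.isEssentialSocle [IsLocalRing R] (K : Ideal R)
    [IsLocalRing (R ⧸ K)] (X : Type u) [AddCommGroup X] [Module R X]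
    [Module (R ⧸ K) X] [IsScalarTower R (R ⧸ K) X]
    (h : IsInjectiveHullOfResidueField (R ⧸ K) X) : ∃ s : X, IsEssentialSocle (R := R) s := by
  obtain ⟨-, φ, hφ, hess⟩ := h
  have hs : Function.Surjective (Ideal.Quotient.mk K) := Ideal.Quotient.mk_surjective
  have : IsLocalHom (Ideal.Quotient.mk K) := .of_surjective _ hs
  have hmk : ∀ (r : R) (x : X), Ideal.Quotient.mk K r • x = r • x := fun r x =>
    algebraMap_smul (R ⧸ K) r x
  have hφ1 : ∀ a : R ⧸ K, φ (residue _ a) = a • φ 1 := fun a => by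
    rw [← map_smul, Algebra.smul_def, mul_one]; rfl
  refine ⟨φ 1, fun r => ?_, fun e he => ?_⟩
  · rw [← hmk, ← hφ1, map_eq_zero_iff φ hφ, residue_eq_zero_iff, mem_maximalIdeal,
      mem_maximalIdeal, mem_nonunits_iff, mem_nonunits_iff, isUnit_map_iff]
  · obtain ⟨y, ⟨hy1, z, rfl⟩, hy0⟩ := (Submodule.ne_bot_iff _).1
      (hess (Submodule.span (R ⧸ K) {e}) (by simpa using he))
    obtain ⟨a, ha⟩ := Submodule.mem_span_singleton.1 hy1
    have hz : z ≠ 0 := by rintro rfl; simp at hy0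
    obtain ⟨b, hb⟩ := residue_surjective z⁻¹
    obtain ⟨r, hr⟩ := hs (b * a)
    refine ⟨r, ?_⟩
    rw [← hmk, hr, mul_smul, ha, ← map_smul, Algebra.smul_def]
    congr 1
    change residue _ b * z = 1
    rw [hb, inv_mul_cancel₀ hz]

/-- Uniqueness of the injective hull of the residue field over `R ⧸ K`. -/
lemma nonempty_linearEquiv_of_isEssentialSocle [IsLocalRing R] (K : Ideal R)
    (X Y : Type u)
    [AddCommGroup X] [Module R X] [AddCommGroup Y] [Module R Y]
    (hX : InjectiveModulo K X) (hY : InjectiveModulo K Y)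
    (hKX : ∀ a ∈ K, ∀ x : X, a • x = 0) (hKY : ∀ a ∈ K, ∀ y : Y, a • y = 0)
    {s : X} {t : Y} (hs : IsEssentialSocle (R := R) s) (ht : IsEssentialSocle (R := R) t) :
    Nonempty (X ≃ₗ[R] Y) := by
  have ne : ∀ {Z : Type u} [AddCommGroup Z] [Module R Z] {z : Z},
      IsEssentialSocle (R := R) z → z ≠ 0 := fun hz h0 =>
    (Ideal.ne_top_iff_one _).1 (maximalIdeal.isMaximal R).ne_top ((hz.1 1).1 (by simp [h0]))
  let i : (R ⧸ maximalIdeal R) →ₗ[R] X := Submodule.liftQ (maximalIdeal R)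
    (LinearMap.toSpanSingleton R X s) (fun r hr => (hs.1 r).2 hr)
  let j : (R ⧸ maximalIdeal R) →ₗ[R] Y := Submodule.liftQ (maximalIdeal R)
    (LinearMap.toSpanSingleton R Y t) (fun r hr => (ht.1 r).2 hr)
  have hi : Function.Injective i := by
    rw [← LinearMap.ker_eq_bot]
    refine Submodule.ker_liftQ_eq_bot _ _ _ fun r hr => (hs.1 r).1 hr
  obtain ⟨f, hf⟩ := hY _ _ i hi hKX j
  have hfs : f s = t := by
    have : f ((1 : R) • s) = (1 : R) • t := hf (Submodule.Quotient.mk 1)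
    rwa [one_smul, one_smul] at this
  have hfi : Function.Injective f := by
    rw [injective_iff_map_eq_zero]
    intro e he
    by_contra h0
    obtain ⟨r, hr⟩ := hs.2 e h0
    apply ne ht
    rw [← hfs, ← hr, map_smul, he, smul_zero]
  -- `f` is split by a map `g`, which is injective because it does not kill `t`.
  obtain ⟨g, hg⟩ := hX _ _ f hfi hKY LinearMap.id
  have hgi : Function.Injective g := by
    rw [injective_iff_map_eq_zero]
    intro e he
    by_contra h0
    obtain ⟨r, hr⟩ := ht.2 e h0
    apply ne hs
    have := hg s
    rw [hfs, ← hr, map_smul, he, smul_zero] at this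
    exact this.symm
  exact ⟨LinearEquiv.ofBijective f ⟨hfi, fun y => ⟨g y, hgi (hg _)⟩⟩⟩

/-- The submodule `X[I]` of elements killed by `I`. -/
def killedBy (I : Ideal R) (X : Type u) [AddCommGroup X] [Module R X] : Submodule R X :=
  Submodule.torsionBySet R X I

lemma mem_killedBy {I : Ideal R} {X : Type u} [AddCommGroup X] [Module R X] {x : X} :
    x ∈ killedBy I X ↔ ∀ a ∈ I, a • x = 0 := by
  simp [killedBy, Submodule.mem_torsionBySet_iff]

lemma InjectiveModulo.killedBy {q I : Ideal R} (hq : q ≤ I) {X : Type u} [AddCommGroup X]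
    [Module R X] (h : InjectiveModulo q X) : InjectiveModulo I (killedBy I X) := by
  intro N M _ _ _ _ f hf hM g
  obtain ⟨k, hk⟩ := h N M f hf (fun a ha => hM a (hq ha)) ((_root_.killedBy I X).subtype ∘ₗ g)
  refine ⟨k.codRestrict _ fun m => mem_killedBy.2 fun a ha => ?_, fun n => Subtype.ext (hk n)⟩
  rw [← map_smul, hM a ha, map_zero]

/-- If `(q : u) = I` then `X[I] ≤ uX`. -/
lemma InjectiveModulo.exists_smul_eq {q I : Ideal R} {u : R} {X : Type u} [AddCommGroup X]
    [Module R X] (h : InjectiveModulo q X) (hu : ∀ r, r * u ∈ q → r ∈ I)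
    (hI : ∀ a ∈ I, a * u ∈ q) {e : X} (he : ∀ a ∈ I, a • e = 0) : ∃ y, u • y = e := by
  -- Extend `R ⧸ I → X`, `1 ↦ e`, along multiplication by `u`, `R ⧸ I → R ⧸ q`.
  let f : (R ⧸ I) →ₗ[R] (R ⧸ q) := Submodule.liftQ I
    (q.mkQ ∘ₗ LinearMap.toSpanSingleton R R u)
    (fun a ha => (Submodule.Quotient.mk_eq_zero q).2 (hI a ha))
  have hf : Function.Injective f := by
    rw [← LinearMap.ker_eq_bot]
    refine Submodule.ker_liftQ_eq_bot _ _ _ fun r hr => hu r ?_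
    exact (Submodule.Quotient.mk_eq_zero q).1 hr
  let g : (R ⧸ I) →ₗ[R] X := Submodule.liftQ I (LinearMap.toSpanSingleton R X e) he
  obtain ⟨k, hk⟩ := h _ _ f hf (fun a ha m => by
    obtain ⟨m, rfl⟩ := Submodule.Quotient.mk_surjective _ m
    exact (Submodule.Quotient.mk_eq_zero q).2 (q.mul_mem_right _ ha)) g
  refine ⟨k (Submodule.Quotient.mk 1), ?_⟩
  have h1 : k (Submodule.Quotient.mk ((1 : R) • u)) = (1 : R) • e := hk (Submodule.Quotient.mk 1)
  rw [← map_smul, ← Submodule.Quotient.mk_smul, smul_eq_mul, mul_comm, ← smul_eq_mul, h1, one_smul]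

/-- If `(q : (x₁, …, xₙ)) ≤ q + (u)` then `X[u] ≤ (x₁, …, xₙ) X`. -/
lemma InjectiveModulo.mem_smul_top {q : Ideal R} {u : R} {X : Type u} [AddCommGroup X]
    [Module R X] (h : InjectiveModulo q X) (l : List R)
    (hl : ∀ r, (∀ x ∈ l, r * x ∈ q) → r ∈ q ⊔ Ideal.span {u})
    (hq : ∀ a ∈ q, ∀ x : X, a • x = 0) {e : X} (he : u • e = 0) :
    e ∈ (Ideal.ofList l • ⊤ : Submodule R X) := by
  -- `r ↦ (r xᵢ)ᵢ` embeds `R ⧸ (q : I)` into `(R ⧸ q)ⁿ`; extend `1 ↦ e` along this embedding.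
  let F : R →ₗ[R] (Fin l.length → R ⧸ q) :=
    LinearMap.pi fun i => q.mkQ ∘ₗ LinearMap.toSpanSingleton R R l[i]
  let f := Submodule.liftQ (LinearMap.ker F) F le_rfl
  have hf : Function.Injective f := by
    rw [← LinearMap.ker_eq_bot]
    exact Submodule.ker_liftQ_eq_bot _ _ _ le_rfl
  have hker : LinearMap.ker F ≤ LinearMap.ker (LinearMap.toSpanSingleton R X e) := by
    intro r hr
    have h1 : r ∈ q ⊔ Ideal.span {u} := by
      refine hl r fun x hx => ?_
      obtain ⟨i, hi, rfl⟩ := List.getElem_of_mem hx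
      exact (Submodule.Quotient.mk_eq_zero q).1 (congrFun (LinearMap.mem_ker.1 hr) ⟨i, hi⟩)
    obtain ⟨s, hs⟩ := mem_sup_span_singleton_iff.1 h1
    have h2 := hq _ hs e
    rw [sub_smul, mul_smul, he, smul_zero, sub_zero] at h2
    exact h2
  obtain ⟨k, hk⟩ := h _ _ f hf (fun a ha m => by
    funext i
    obtain ⟨m', hm'⟩ := Submodule.Quotient.mk_surjective _ (m i)
    rw [Pi.smul_apply, ← hm']
    exact (Submodule.Quotient.mk_eq_zero q).2 (q.mul_mem_right _ ha))
    (Submodule.liftQ _ (LinearMap.toSpanSingleton R X e) hker)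
  have h1 : k (F 1) = e := by
    have : k (F 1) = (1 : R) • e := hk (Submodule.Quotient.mk 1)
    rw [this, one_smul]
  have h2 : F 1 = ∑ i, l[i] • (Pi.single i (Submodule.Quotient.mk 1) : Fin l.length → R ⧸ q) := by
    funext j
    simp only [Finset.sum_apply, Pi.smul_apply, Pi.single_apply, smul_ite, smul_zero]
    rw [Finset.sum_ite_eq, if_pos (Finset.mem_univ _), ← Submodule.Quotient.mk_smul]
    simp [F]
  rw [← h1, h2, map_sum]
  refine Submodule.sum_mem _ fun i _ => ?_
  rw [map_smul]
  exact Submodule.smul_mem_smul (Ideal.subset_span (List.getElem_mem _)) trivial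

/-- `R/I ⊗ X ≃ X/IX ≃ uX = X[I]`, when `(q : u) = I` and `(q : I) = q + (u)`. -/
lemma InjectiveModulo.tensor_equiv {q I : Ideal R} {u : R} {X : Type u} [AddCommGroup X]
    [Module R X] (h : InjectiveModulo q X) (l : List R) (hIl : I = Ideal.ofList l)
    (hq : ∀ a ∈ q, ∀ x : X, a • x = 0)
    (hu : ∀ r, r * u ∈ q → r ∈ I) (hI : ∀ a ∈ I, a * u ∈ q)
    (hl : ∀ r, (∀ x ∈ l, r * x ∈ q) → r ∈ q ⊔ Ideal.span {u}) :
    Nonempty (((R ⧸ I) ⊗[R] X) ≃ₗ[R] _root_.killedBy I X) := by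
  let f : X →ₗ[R] _root_.killedBy I X := (LinearMap.lsmul R X u).codRestrict _ fun x =>
    mem_killedBy.2 fun a ha => by
      rw [LinearMap.lsmul_apply, ← mul_smul]; exact hq _ (hI a ha) x
  have hker : LinearMap.ker f = I • ⊤ := by
    apply le_antisymm
    · intro e he
      rw [hIl]
      exact h.mem_smul_top l hl hq (congrArg Subtype.val (LinearMap.mem_ker.1 he))
    · rw [Submodule.smul_le]
      intro a ha x _
      apply Subtype.ext
      change u • a • x = 0
      rw [← mul_smul, mul_comm]
      exact hq _ (hI a ha) x
  have hsurj : Function.Surjective f := by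
    rintro ⟨e, he⟩
    obtain ⟨e', he'⟩ := h.exists_smul_eq hu hI (mem_killedBy.1 he)
    exact ⟨e', Subtype.ext he'⟩
  exact ⟨quotTensorEquivQuotSMul X I ≪≫ₗ Submodule.quotEquivOfEq _ _ hker.symm ≪≫ₗ
    f.quotKerEquivOfSurjective hsurj⟩

lemma IsEssentialSocle.killedBy [IsLocalRing R] {I : Ideal R} (hI : I ≤ maximalIdeal R)
    {X : Type u} [AddCommGroup X] [Module R X] {s : X} (hs : IsEssentialSocle (R := R) s) :
    ∃ t : _root_.killedBy I X, IsEssentialSocle (R := R) t := by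
  refine ⟨⟨s, mem_killedBy.2 fun a ha => (hs.1 a).2 (hI ha)⟩, fun r => ?_, fun e he => ?_⟩
  · rw [← hs.1 r, Subtype.ext_iff]; rfl
  · obtain ⟨r, hr⟩ := hs.2 e.1 fun h0 => he (Subtype.ext h0)
    exact ⟨r, Subtype.ext hr⟩

end Hull

/-- Let `(R, m)` be a Noetherian local ring of prime characteristic `p`
and `I` an ideal generated by a regular sequence.  Then
`R/I ⊗_R E_{R/I^[p]}(R/m) ≅ E_{R/I}(R/m)`, where `I^[p] = I.map (frobenius R p)` is the ideal
generated by the `p`-th powers of the elements of `I`. -/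
theorem quotient_tensor_injectiveHull (R : Type u) [CommRing R] [IsNoetherianRing R]
    [IsLocalRing R] (p : ℕ) [Fact p.Prime] [CharP R p]
    (I : Ideal R) (rs : List R) (hreg : RingTheory.Sequence.IsRegular R rs)
    (hI : I = Ideal.span {x | x ∈ rs})
    [IsLocalRing (R ⧸ I.map (frobenius R p))] [IsLocalRing (R ⧸ I)]
    (E₁ : Type u) [AddCommGroup E₁] [Module (R ⧸ I.map (frobenius R p)) E₁]
    (hE₁ : IsInjectiveHullOfResidueField (R ⧸ I.map (frobenius R p)) E₁)
    (E₂ : Type u) [AddCommGroup E₂] [Module (R ⧸ I) E₂]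
    (hE₂ : IsInjectiveHullOfResidueField (R ⧸ I) E₂) :
    Nonempty
      (((R ⧸ I) ⊗[R] (RestrictScalars R (R ⧸ I.map (frobenius R p)) E₁)) ≃ₗ[R]
        RestrictScalars R (R ⧸ I) E₂) := by
  obtain ⟨n, hn⟩ : ∃ n, p = n + 1 := ⟨p - 1, by have := (Fact.out : p.Prime).pos; omega⟩
  have hIl : I = Ideal.ofList rs := hI
  have hq : I.map (frobenius R p) = Ideal.ofList (rs.map (· ^ (n + 1))) := by
    rw [hIl, Ideal.map_ofList, ← hn]; rfl
  have hIm : I ≤ maximalIdeal R := by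
    apply le_maximalIdeal
    rintro rfl
    exact hreg.top_ne_smul (by rw [← hIl]; simp)
  have hperm : PermRegularModulo ⊥ rs := fun l hl =>
    regularModulo_bot (isRegular_of_perm hreg hl.symm).toIsWeaklyRegular
  have hu := mem_of_mul_mem n rs ⊥ hperm
  have hl := mem_of_forall_mul_mem n rs ⊥ hperm
  simp only [bot_sup_eq, ← hIl, ← hq] at hu hl
  have hIu : ∀ a ∈ I, a * (rs.map (· ^ n)).prod ∈ I.map (frobenius R p) := by
    intro a ha
    rw [hI] at ha
    rw [hq]
    induction ha using Submodule.span_induction with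
    | mem x hx => exact mul_prod_pow_mem n hx
    | zero => simp
    | add x y _ _ hx hy => rw [add_mul]; exact Ideal.add_mem _ hx hy
    | smul r x _ hx => rw [smul_eq_mul, mul_assoc]; exact Ideal.mul_mem_left _ _ hx
  have hqI : I.map (frobenius R p) ≤ I := Ideal.map_le_iff_le_comap.2 fun x hx => by
    rw [Ideal.mem_comap, frobenius_def]
    exact I.pow_mem_of_mem hx p (Fact.out : p.Prime).pos
  let : Module R E₁ := Module.compHom E₁ (algebraMap R (R ⧸ I.map (frobenius R p)))
  let : Module R E₂ := Module.compHom E₂ (algebraMap R (R ⧸ I))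
  have : IsScalarTower R (R ⧸ I.map (frobenius R p)) E₁ := .of_algebraMap_smul fun _ _ => rfl
  have : IsScalarTower R (R ⧸ I) E₂ := .of_algebraMap_smul fun _ _ => rfl
  have kill : ∀ (K : Ideal R) (X : Type u) [AddCommGroup X] [Module R X] [Module (R ⧸ K) X]
      [IsScalarTower R (R ⧸ K) X], ∀ a ∈ K, ∀ x : X, a • x = 0 := by
    intro K X _ _ _ _ a ha x
    rw [← algebraMap_smul (R ⧸ K) a x, Ideal.Quotient.algebraMap_eq,
      Ideal.Quotient.eq_zero_iff_mem.2 ha, zero_smul]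
  have h₁ := InjectiveModulo.of_injective (I.map (frobenius R p)) E₁ hE₁.1
  have h₂ := InjectiveModulo.of_injective I E₂ hE₂.1
  obtain ⟨s₁, hs₁⟩ := hE₁.isEssentialSocle
  obtain ⟨s₂, hs₂⟩ := hE₂.isEssentialSocle
  obtain ⟨t, ht⟩ := hs₁.killedBy hIm
  obtain ⟨e⟩ := h₁.tensor_equiv rs hIl (kill _ _) hu hIu hl
  obtain ⟨e'⟩ := nonempty_linearEquiv_of_isEssentialSocle I _ _ (h₁.killedBy hqI) h₂
    (fun a ha x => Subtype.ext (mem_killedBy.1 x.2 a ha)) (kill _ _) ht hs₂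
  exact ⟨e ≪≫ₗ e'⟩
end
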